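/- Assume p_1,…,p_m are positive rational numbers. A quiver datum (V, p) is extremizable if and only if V is isomorphic (via base changes g_i ∈ GL(d_i, ℝ) and h_j ∈ GL(n_j, ℝ)) to a direct sum of p-stable representations; that is, there exist dimension vectors d^1, …, d^s with d^1 + ⋯ + d^s = (d_1,…,d_k, n_1,…,n_m) and invertible matrices g_i, h_j such that each transformed matrix h_j V_a g_i^{-1} is block diagonal with blocks of sizes d^ℓ_j × d^ℓ_{\underline i} (ℓ ∈ [s]), and for each ℓ ∈ [s] the ℓ-th diagonal block representation is p-stable. -/

import Mathlib

open Matrix BigOperators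

/-- The value of the capacity functional of a quiver datum `(V, p)` at a tuple `Y`
of `n j × n j` matrices. -/
noncomputable def capVal {k m : ℕ} {d : Fin k → ℕ} {n : Fin m → ℕ} {A : Fin k → Fin m → ℕ}
    (p : Fin m → ℝ)
    (V : ∀ i : Fin k, ∀ j : Fin m, Fin (A i j) → Matrix (Fin (n j)) (Fin (d i)) ℝ)
    (Y : ∀ j : Fin m, Matrix (Fin (n j)) (Fin (n j)) ℝ) : ℝ :=
  (∏ i : Fin k, (∑ j : Fin m, p j • ∑ a : Fin (A i j), (V i j a)ᵀ * Y j * V i j a).det) /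
    ∏ j : Fin m, (Y j).det ^ (p j)

/-- The capacity `cap(V, p)` of a quiver datum: the infimum of the capacity functional
over all tuples of positive definite matrices. -/
noncomputable def cap {k m : ℕ} {d : Fin k → ℕ} {n : Fin m → ℕ} {A : Fin k → Fin m → ℕ}
    (p : Fin m → ℝ)
    (V : ∀ i : Fin k, ∀ j : Fin m, Fin (A i j) → Matrix (Fin (n j)) (Fin (d i)) ℝ) : ℝ :=
  sInf { r : ℝ | ∃ Y : ∀ j : Fin m, Matrix (Fin (n j)) (Fin (n j)) ℝ,
    (∀ j, (Y j).PosDef) ∧ r = capVal p V Y }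

/-- A quiver datum `(V, p)` is extremizable if it is feasible (`cap(V,p) > 0`) and the
infimum defining the capacity is attained at some tuple of positive definite matrices. -/
def Extremizable {k m : ℕ} {d : Fin k → ℕ} {n : Fin m → ℕ} {A : Fin k → Fin m → ℕ}
    (p : Fin m → ℝ)
    (V : ∀ i : Fin k, ∀ j : Fin m, Fin (A i j) → Matrix (Fin (n j)) (Fin (d i)) ℝ) : Prop :=
  0 < cap p V ∧ ∃ Y : ∀ j : Fin m, Matrix (Fin (n j)) (Fin (n j)) ℝ,
    (∀ j, (Y j).PosDef) ∧ capVal p V Y = cap p V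

/-- A quiver datum `(V, p)` is geometric. -/
def IsGeometric {k m : ℕ} {d : Fin k → ℕ} {n : Fin m → ℕ} {A : Fin k → Fin m → ℕ}
    (p : Fin m → ℝ)
    (V : ∀ i : Fin k, ∀ j : Fin m, Fin (A i j) → Matrix (Fin (n j)) (Fin (d i)) ℝ) : Prop :=
  (∀ i, ∑ j : Fin m, p j • ∑ a : Fin (A i j), (V i j a)ᵀ * V i j a = 1) ∧
  (∀ j, ∑ i : Fin k, ∑ a : Fin (A i j), V i j a * (V i j a)ᵀ = 1)

/-- A representation `W` (of dimension vector `(d, n)`) is `p`-stable: it is nonzero, its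
dimension vector is orthogonal to `p`, and every compatible tuple of subspaces that is
neither zero nor the whole representation satisfies the strict inequality
`∑_i dim U_i < ∑_j p_j dim U_j`. -/
def Stable {k m : ℕ} {d : Fin k → ℕ} {n : Fin m → ℕ} {A : Fin k → Fin m → ℕ}
    (p : Fin m → ℝ)
    (W : ∀ i : Fin k, ∀ j : Fin m, Fin (A i j) → Matrix (Fin (n j)) (Fin (d i)) ℝ) : Prop :=
  ((∃ i, 0 < d i) ∨ (∃ j, 0 < n j)) ∧
  (∑ i : Fin k, (d i : ℝ) = ∑ j : Fin m, p j * (n j : ℝ)) ∧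
  ∀ (U1 : ∀ i : Fin k, Submodule ℝ (Fin (d i) → ℝ))
    (U2 : ∀ j : Fin m, Submodule ℝ (Fin (n j) → ℝ)),
    (∀ i j a, (U1 i).map (W i j a).mulVecLin ≤ U2 j) →
    ¬((∀ i, U1 i = ⊥) ∧ (∀ j, U2 j = ⊥)) →
    ¬((∀ i, U1 i = ⊤) ∧ (∀ j, U2 j = ⊤)) →
    ∑ i : Fin k, (Module.finrank ℝ (U1 i) : ℝ) <
      ∑ j : Fin m, p j * (Module.finrank ℝ (U2 j) : ℝ)

/-- The embedding of the `ℓ`-th block into the concatenation: `fembed f ℓ r` is the index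
of position `r` of block `ℓ`, the blocks being laid out in increasing order of `ℓ`. -/
def fembed {s : ℕ} (f : Fin s → ℕ) (ℓ : Fin s) (r : Fin (f ℓ)) : Fin (∑ ℓ' : Fin s, f ℓ') :=
  ⟨(∑ ℓ' ∈ Finset.univ.filter (fun ℓ' => ℓ' < ℓ), f ℓ') + (r : ℕ), by
    have h2 : f ℓ + ∑ ℓ' ∈ Finset.univ.filter (fun ℓ' => ℓ' < ℓ), f ℓ' ≤ ∑ ℓ' : Fin s, f ℓ' := by
      rw [← Finset.sum_insert (by simp)]
      exact Finset.sum_le_sum_of_subset (Finset.subset_univ _)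
    have h3 := r.isLt
    omega⟩


/-- The matrix `M_i(Y)` whose determinants form the numerator of the capacity functional. -/
noncomputable def MM {k m : ℕ} {d : Fin k → ℕ} {n : Fin m → ℕ} {A : Fin k → Fin m → ℕ}
    (p : Fin m → ℝ)
    (V : ∀ i : Fin k, ∀ j : Fin m, Fin (A i j) → Matrix (Fin (n j)) (Fin (d i)) ℝ)
    (Y : ∀ j : Fin m, Matrix (Fin (n j)) (Fin (n j)) ℝ) (i : Fin k) :
    Matrix (Fin (d i)) (Fin (d i)) ℝ :=
  ∑ j : Fin m, p j • ∑ a : Fin (A i j), (V i j a)ᵀ * Y j * V i j a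

theorem capVal_eq {k m : ℕ} {d : Fin k → ℕ} {n : Fin m → ℕ} {A : Fin k → Fin m → ℕ}
    (p : Fin m → ℝ)
    (V : ∀ i : Fin k, ∀ j : Fin m, Fin (A i j) → Matrix (Fin (n j)) (Fin (d i)) ℝ)
    (Y : ∀ j : Fin m, Matrix (Fin (n j)) (Fin (n j)) ℝ) :
    capVal p V Y = (∏ i, (MM p V Y i).det) / ∏ j : Fin m, (Y j).det ^ (p j) := rfl

/-- Real spectral theorem in explicit form. -/
theorem spectral_real {ι : Type*} [Fintype ι] [DecidableEq ι] (M : Matrix ι ι ℝ)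
    (hM : M.IsHermitian) :
    ∃ (U : Matrix ι ι ℝ) (l : ι → ℝ), Uᵀ * U = 1 ∧ U * Uᵀ = 1 ∧ M = U * diagonal l * Uᵀ ∧
      M.det = ∏ r, l r ∧ (M.PosDef → ∀ r, 0 < l r) ∧ (M.PosSemidef → ∀ r, 0 ≤ l r) := by
  refine ⟨hM.eigenvectorUnitary, hM.eigenvalues, ?_, ?_, ?_, ?_, ?_, ?_⟩
  · exact Unitary.coe_star_mul_self hM.eigenvectorUnitary
  · exact Unitary.coe_mul_star_self hM.eigenvectorUnitary
  · have := hM.spectral_theorem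
    rw [Unitary.conjStarAlgAut_apply] at this
    exact this
  · simpa using hM.det_eq_prod_eigenvalues
  · intro h; exact hM.posDef_iff_eigenvalues_pos.1 h
  · intro h r; exact hM.posSemidef_iff_eigenvalues_nonneg.1 h r

theorem MM_posSemidef {k m : ℕ} {d : Fin k → ℕ} {n : Fin m → ℕ} {A : Fin k → Fin m → ℕ}
    (p : Fin m → ℝ) (hp : ∀ j, 0 < p j)
    (V : ∀ i : Fin k, ∀ j : Fin m, Fin (A i j) → Matrix (Fin (n j)) (Fin (d i)) ℝ)
    (Y : ∀ j : Fin m, Matrix (Fin (n j)) (Fin (n j)) ℝ) (hY : ∀ j, (Y j).PosSemidef) (i : Fin k) :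
    (MM p V Y i).PosSemidef := by
  unfold MM
  refine posSemidef_sum _ fun j _ => PosSemidef.smul ?_ (hp j).le
  refine posSemidef_sum _ fun a _ => ?_
  simpa [conjTranspose_eq_transpose_of_trivial] using (hY j).conjTranspose_mul_mul_same (V i j a)

theorem MM_transform {k m : ℕ} {d : Fin k → ℕ} {n : Fin m → ℕ} {A : Fin k → Fin m → ℕ}
    (p : Fin m → ℝ)
    (V : ∀ i : Fin k, ∀ j : Fin m, Fin (A i j) → Matrix (Fin (n j)) (Fin (d i)) ℝ)
    (G : ∀ i : Fin k, Matrix (Fin (d i)) (Fin (d i)) ℝ)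
    (h : ∀ j : Fin m, Matrix (Fin (n j)) (Fin (n j)) ℝ)
    (Z : ∀ j : Fin m, Matrix (Fin (n j)) (Fin (n j)) ℝ) (i : Fin k) :
    MM p (fun i j a => h j * V i j a * G i) Z i =
      (G i)ᵀ * MM p V (fun j => (h j)ᵀ * Z j * h j) i * G i := by
  simp only [MM, Finset.mul_sum, Finset.sum_mul, Matrix.mul_smul, Matrix.smul_mul,
    transpose_mul, Matrix.mul_assoc]

theorem capVal_transform {k m : ℕ} {d : Fin k → ℕ} {n : Fin m → ℕ} {A : Fin k → Fin m → ℕ}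
    (p : Fin m → ℝ)
    (V : ∀ i : Fin k, ∀ j : Fin m, Fin (A i j) → Matrix (Fin (n j)) (Fin (d i)) ℝ)
    (G : ∀ i : Fin k, Matrix (Fin (d i)) (Fin (d i)) ℝ)
    (h : ∀ j : Fin m, Matrix (Fin (n j)) (Fin (n j)) ℝ)
    (hG : ∀ i, IsUnit (G i).det) (hh : ∀ j, IsUnit (h j).det) :
    ∃ c : ℝ, 0 < c ∧ ∀ Z : ∀ j : Fin m, Matrix (Fin (n j)) (Fin (n j)) ℝ,
      (∀ j, (Z j).PosDef) → capVal p (fun i j a => h j * V i j a * G i) Z =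
        c * capVal p V (fun j => (h j)ᵀ * Z j * h j) := by
  have hh' : ∀ j, (0:ℝ) < (h j).det ^ 2 := fun j => by
    have := (hh j).ne_zero
    positivity
  have hG' : ∀ j, (0:ℝ) < (G j).det ^ 2 := fun j => by
    have := (hG j).ne_zero
    positivity
  have h2 : (0:ℝ) < ∏ j, ((h j).det ^ 2) ^ (p j) :=
    Finset.prod_pos fun j _ => Real.rpow_pos_of_pos (hh' j) _
  have h1 : (0:ℝ) < ∏ i, ((G i).det ^ 2) := Finset.prod_pos fun j _ => hG' j
  refine ⟨(∏ i, ((G i).det ^ 2)) * ∏ j, ((h j).det ^ 2) ^ (p j), mul_pos h1 h2, ?_⟩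
  intro Z hZ
  have h3 : (0:ℝ) < ∏ j, ((Z j).det) ^ (p j) :=
    Finset.prod_pos fun j _ => Real.rpow_pos_of_pos (hZ j).det_pos _
  rw [capVal_eq, capVal_eq]
  have e1 : ∏ i, (MM p (fun i j a => h j * V i j a * G i) Z i).det =
      (∏ i, ((G i).det ^ 2)) * ∏ i, (MM p V (fun j => (h j)ᵀ * Z j * h j) i).det := by
    rw [← Finset.prod_mul_distrib]
    refine Finset.prod_congr rfl fun i _ => ?_
    rw [MM_transform]
    simp only [det_mul, det_transpose]
    ring
  have e2 : ∏ j, ((h j)ᵀ * Z j * h j).det ^ (p j) =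
      (∏ j, ((h j).det ^ 2) ^ (p j)) * ∏ j, ((Z j).det) ^ (p j) := by
    rw [← Finset.prod_mul_distrib]
    refine Finset.prod_congr rfl fun j _ => ?_
    rw [← Real.mul_rpow (hh' j).le (hZ j).det_pos.le]
    simp only [det_mul, det_transpose]
    ring_nf
  rw [e1, e2]
  field_simp

/-- conjugating a positive definite matrix -/
theorem posDef_conj {ι : Type*} [Fintype ι] [DecidableEq ι] (Z h : Matrix ι ι ℝ) (hZ : Z.PosDef)
    (hh : IsUnit h.det) : (hᵀ * Z * h).PosDef := by
  have := hZ.conjTranspose_mul_mul_same (B := h)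
    (mulVec_injective_iff_isUnit.2 ((isUnit_iff_isUnit_det _).2 hh))
  simpa [conjTranspose_eq_transpose_of_trivial] using this

theorem geometric_transform {k m : ℕ} {d : Fin k → ℕ} {n : Fin m → ℕ} {A : Fin k → Fin m → ℕ}
    (p : Fin m → ℝ)
    (W : ∀ i : Fin k, ∀ j : Fin m, Fin (A i j) → Matrix (Fin (n j)) (Fin (d i)) ℝ)
    (hW : IsGeometric p W)
    (Q : ∀ i : Fin k, Matrix (Fin (d i)) (Fin (d i)) ℝ)
    (U : ∀ j : Fin m, Matrix (Fin (n j)) (Fin (n j)) ℝ)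
    (hQ : ∀ i, (Q i)ᵀ * Q i = 1) (hU : ∀ j, (U j)ᵀ * U j = 1) :
    IsGeometric p (fun i j a => (U j)ᵀ * W i j a * Q i) := by
  have hQ' : ∀ i, Q i * (Q i)ᵀ = 1 := fun i => mul_eq_one_comm.1 (hQ i)
  have hU' : ∀ i, U i * (U i)ᵀ = 1 := fun i => mul_eq_one_comm.1 (hU i)
  constructor
  · intro i
    have := congrArg (fun X => (Q i)ᵀ * X * Q i) (hW.1 i)
    simp only [Finset.mul_sum, Finset.sum_mul, Matrix.mul_smul, Matrix.smul_mul, Matrix.mul_one,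
      hQ] at this
    rw [← this]
    refine Finset.sum_congr rfl fun j _ => ?_
    congr 1
    refine Finset.sum_congr rfl fun a _ => ?_
    calc _ = (Q i)ᵀ * (W i j a)ᵀ * (U j * (U j)ᵀ) * W i j a * Q i := by
          simp only [transpose_mul, transpose_transpose, Matrix.mul_assoc]
      _ = _ := by rw [hU']; simp only [Matrix.mul_one, Matrix.mul_assoc]
  · intro j
    have := congrArg (fun X => (U j)ᵀ * X * U j) (hW.2 j)
    simp only [Finset.mul_sum, Finset.sum_mul, Matrix.mul_one, hU] at this
    rw [← this]
    refine Finset.sum_congr rfl fun i _ => ?_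
    refine Finset.sum_congr rfl fun a _ => ?_
    calc _ = (U j)ᵀ * (W i j a) * (Q i * (Q i)ᵀ) * (W i j a)ᵀ * U j := by
          simp only [transpose_mul, transpose_transpose, Matrix.mul_assoc]
      _ = _ := by rw [hQ']; simp only [Matrix.mul_one, Matrix.mul_assoc]

theorem geometric_le {k m : ℕ} {d : Fin k → ℕ} {n : Fin m → ℕ} {A : Fin k → Fin m → ℕ}
    (p : Fin m → ℝ) (hp : ∀ j, 0 < p j)
    (W : ∀ i : Fin k, ∀ j : Fin m, Fin (A i j) → Matrix (Fin (n j)) (Fin (d i)) ℝ)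
    (hW : IsGeometric p W)
    (Z : ∀ j : Fin m, Matrix (Fin (n j)) (Fin (n j)) ℝ) (hZ : ∀ j, (Z j).PosDef) :
    ∏ j, (Z j).det ^ (p j) ≤ ∏ i, (MM p W Z i).det := by
  have hM := fun i => MM_posSemidef p hp W Z (fun j => (hZ j).posSemidef) i
  choose U l hU1 hU2 hU3 hU4 hU5 hU6 using fun j => spectral_real (Z j) (hZ j).isHermitian
  choose Q μ hQ1 hQ2 hQ3 hQ4 hQ5 hQ6 using fun i => spectral_real _ (hM i).isHermitian
  have hg := geometric_transform p W hW Q U hQ1 hU1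
  set B := fun i j a => (U j)ᵀ * W i j a * Q i with hB
  have hl : ∀ j r, 0 < l j r := fun j => hU5 j (hZ j)
  have key : ∀ i, MM p B (fun j => diagonal (l j)) i = diagonal (μ i) := by
    intro i
    rw [hB, MM_transform]
    have : (fun j => (U j)ᵀᵀ * diagonal (l j) * (U j)ᵀ) = Z := by
      funext j; rw [transpose_transpose, ← hU3]
    rw [this, hQ3]
    calc _ = ((Q i)ᵀ * Q i) * diagonal (μ i) * ((Q i)ᵀ * Q i) := by
          simp only [Matrix.mul_assoc]
      _ = _ := by rw [hQ1]; simp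
  let c : ∀ i : Fin k, Fin (d i) → (Σ j : Fin m, Fin (n j)) → ℝ :=
    fun i s x => p x.1 * ∑ a, (B i x.1 a x.2 s) ^ 2
  have c0 : ∀ i s x, 0 ≤ c i s x := fun i s x =>
    mul_nonneg (hp _).le (Finset.sum_nonneg fun a _ => sq_nonneg _)
  have c1 : ∀ i s, ∑ x, c i s x = 1 := by
    intro i s
    have := congrFun (congrFun (hg.1 i) s) s
    simp only [Matrix.sum_apply, Matrix.smul_apply, Matrix.mul_apply, transpose_apply,
      one_apply_eq, smul_eq_mul] at this
    rw [← this, Fintype.sum_sigma]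
    refine Finset.sum_congr rfl fun j _ => ?_
    rw [Finset.sum_comm, Finset.mul_sum]
    simp only [c, pow_two, hB, Matrix.mul_apply, transpose_apply]
  have c2 : ∀ i s, ∑ x, c i s x * l x.1 x.2 = μ i s := by
    intro i s
    have := congrFun (congrFun (key i) s) s
    simp only [MM, Matrix.sum_apply, Matrix.smul_apply, diagonal_apply_eq, smul_eq_mul] at this
    rw [← this, Fintype.sum_sigma]
    refine Finset.sum_congr rfl fun j _ => ?_
    simp only [Matrix.mul_assoc]
    simp only [Matrix.mul_apply (M := (B _ _ _)ᵀ), diagonal_mul, transpose_apply]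
    rw [Finset.sum_comm, Finset.mul_sum]
    refine Finset.sum_congr rfl fun r _ => ?_
    simp only [c]
    rw [mul_assoc, Finset.sum_mul]
    congr 1
    refine Finset.sum_congr rfl fun a _ => ?_
    ring
  have c3 : ∀ x : (Σ j : Fin m, Fin (n j)), ∑ i, ∑ s, c i s x = p x.1 := by
    rintro ⟨j, r⟩
    have := congrFun (congrFun (hg.2 j) r) r
    simp only [Matrix.sum_apply, Matrix.mul_apply (N := (_)ᵀ), transpose_apply,
      one_apply_eq] at this
    simp only [c, ← Finset.mul_sum]
    conv_rhs => rw [← mul_one (p j), ← this]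
    congr 1
    refine Finset.sum_congr rfl fun i _ => ?_
    rw [Finset.sum_comm]
    simp only [pow_two, hB]
  have amgm : ∀ i s, ∏ x : (Σ j : Fin m, Fin (n j)), l x.1 x.2 ^ (c i s x) ≤ μ i s := by
    intro i s
    rw [← c2]
    exact Real.geom_mean_le_arith_mean_weighted Finset.univ _ _ (fun x _ => c0 i s x) (c1 i s)
      (fun x _ => (hl _ _).le)
  calc ∏ j, (Z j).det ^ (p j) = ∏ x : (Σ j : Fin m, Fin (n j)), l x.1 x.2 ^ (p x.1) := by
        rw [Fintype.prod_sigma]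
        refine Finset.prod_congr rfl fun j _ => ?_
        rw [hU4, ← Real.finsetProd_rpow _ _ (fun r _ => (hl j r).le)]
    _ = ∏ x : (Σ j : Fin m, Fin (n j)), ∏ i, ∏ s, l x.1 x.2 ^ (c i s x) := by
        refine Finset.prod_congr rfl fun x _ => ?_
        rw [← c3 x, Real.rpow_sum_of_pos (hl _ _)]
        refine Finset.prod_congr rfl fun i _ => ?_
        rw [Real.rpow_sum_of_pos (hl _ _)]
    _ = ∏ i, ∏ s, ∏ x : (Σ j : Fin m, Fin (n j)), l x.1 x.2 ^ (c i s x) := by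
        rw [Finset.prod_comm]
        refine Finset.prod_congr rfl fun i _ => ?_
        rw [Finset.prod_comm]
    _ ≤ ∏ i, (MM p W Z i).det := by
        refine Finset.prod_le_prod (fun i _ => Finset.prod_nonneg fun s _ =>
          Finset.prod_nonneg fun x _ => (Real.rpow_pos_of_pos (hl _ _) _).le) fun i _ => ?_
        rw [hQ4]
        exact Finset.prod_le_prod (fun s _ => Finset.prod_nonneg fun x _ =>
          (Real.rpow_pos_of_pos (hl _ _) _).le) fun s _ => amgm i s


theorem extremizable_of_geometric {k m : ℕ} {d : Fin k → ℕ} {n : Fin m → ℕ}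
    {A : Fin k → Fin m → ℕ}
    (p : Fin m → ℝ) (hp : ∀ j, 0 < p j)
    (V : ∀ i : Fin k, ∀ j : Fin m, Fin (A i j) → Matrix (Fin (n j)) (Fin (d i)) ℝ)
    (G : ∀ i : Fin k, Matrix (Fin (d i)) (Fin (d i)) ℝ)
    (h : ∀ j : Fin m, Matrix (Fin (n j)) (Fin (n j)) ℝ)
    (hG : ∀ i, IsUnit (G i).det) (hh : ∀ j, IsUnit (h j).det)
    (hW : IsGeometric p (fun i j a => h j * V i j a * G i)) : Extremizable p V := by
  obtain ⟨c, hc, hcap⟩ := capVal_transform p V G h hG hh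
  set W := fun i j a => h j * V i j a * G i with hWdef
  have hge : ∀ Z : ∀ j : Fin m, Matrix (Fin (n j)) (Fin (n j)) ℝ, (∀ j, (Z j).PosDef) →
      1 ≤ capVal p W Z := by
    intro Z hZ
    have h3 : (0:ℝ) < ∏ j, ((Z j).det) ^ (p j) :=
      Finset.prod_pos fun j _ => Real.rpow_pos_of_pos (hZ j).det_pos _
    rw [capVal_eq, one_le_div h3]
    exact geometric_le p hp W hW Z hZ
  have hone : capVal p W (fun j => 1) = 1 := by
    rw [capVal_eq]
    have : ∀ i, MM p W (fun j => 1) i = 1 := fun i => by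
      have := hW.1 i
      simpa only [MM, Matrix.mul_one] using this
    simp [this]
  have h1PD : ∀ j, ((fun j => 1 : ∀ j : Fin m, Matrix (Fin (n j)) (Fin (n j)) ℝ) j).PosDef :=
    fun j => PosDef.one
  let Y0 : ∀ j : Fin m, Matrix (Fin (n j)) (Fin (n j)) ℝ := fun j => (h j)ᵀ * 1 * h j
  have hY0 : ∀ j, (Y0 j).PosDef := fun j => posDef_conj _ _ PosDef.one (hh j)
  have hY0v : c * capVal p V Y0 = 1 := by rw [← hone, hcap _ h1PD]
  have hmin : ∀ Y : ∀ j : Fin m, Matrix (Fin (n j)) (Fin (n j)) ℝ, (∀ j, (Y j).PosDef) →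
      capVal p V Y0 ≤ capVal p V Y := by
    intro Y hY
    have hZ : ∀ j, (((h j)⁻¹)ᵀ * Y j * (h j)⁻¹).PosDef := fun j =>
      posDef_conj _ _ (hY j) (isUnit_nonsing_inv_det _ (hh j))
    have h1 := hge _ hZ
    rw [hcap _ hZ] at h1
    have h2 : (fun j => (h j)ᵀ * (((h j)⁻¹)ᵀ * Y j * (h j)⁻¹) * h j) = Y := by
      funext j
      calc _ = ((h j)⁻¹ * h j)ᵀ * Y j * ((h j)⁻¹ * h j) := by
            simp only [transpose_mul, Matrix.mul_assoc]
        _ = Y j := by rw [nonsing_inv_mul _ (hh j)]; simp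
    rw [h2, ← hY0v] at h1
    exact le_of_mul_le_mul_left h1 hc
  have hcapeq : cap p V = capVal p V Y0 := by
    apply IsLeast.csInf_eq
    refine ⟨⟨Y0, hY0, rfl⟩, ?_⟩
    rintro r ⟨Y, hY, rfl⟩
    exact hmin Y hY
  refine ⟨?_, Y0, hY0, hcapeq.symm⟩
  rw [hcapeq]
  by_contra hcon
  push Not at hcon
  nlinarith

theorem posDef_factor {ι : Type*} [Fintype ι] [DecidableEq ι] (M : Matrix ι ι ℝ)
    (hM : M.PosDef) : ∃ K : Matrix ι ι ℝ, IsUnit K.det ∧ Kᵀ * K = M := by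
  obtain ⟨U, l, h1, h2, h3, h4, h5, -⟩ := spectral_real M hM.isHermitian
  have e : (diagonal (fun r => Real.sqrt (l r)) * Uᵀ)ᵀ * (diagonal (fun r => Real.sqrt (l r)) * Uᵀ)
      = M := by
    rw [transpose_mul, transpose_transpose, diagonal_transpose, h3]
    calc _ = U * (diagonal (fun r => Real.sqrt (l r)) * diagonal (fun r => Real.sqrt (l r))) * Uᵀ := by
          simp only [Matrix.mul_assoc]
      _ = _ := by
          rw [diagonal_mul_diagonal]
          congr; funext r; exact Real.mul_self_sqrt (h5 hM r).le
  refine ⟨_, ?_, e⟩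
  have := congrArg Matrix.det e
  rw [det_mul, det_transpose] at this
  rw [isUnit_iff_ne_zero]
  intro h0
  rw [h0] at this
  have := hM.det_pos
  linarith

theorem det_le_exp_trace {ι : Type*} [Fintype ι] [DecidableEq ι] (P : Matrix ι ι ℝ)
    (hM : (1 + P).PosSemidef) : (1 + P).det ≤ Real.exp P.trace := by
  obtain ⟨U, l, h1, h2, h3, h4, -, h5⟩ := spectral_real (1 + P) hM.isHermitian
  have htr : (1 + P).trace = ∑ r, l r := by
    rw [h3, trace_mul_cycle, h1, Matrix.one_mul, trace_diagonal]
  rw [trace_add, trace_one] at htr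
  have : P.trace = ∑ r, (l r - 1) := by
    rw [Finset.sum_sub_distrib, ← htr]; simp
  rw [h4, this, Real.exp_sum]
  refine Finset.prod_le_prod (fun r _ => h5 hM r) fun r _ => ?_
  have := Real.add_one_le_exp (l r - 1)
  linarith

theorem geometric_of_le {k m : ℕ} {d : Fin k → ℕ} {n : Fin m → ℕ} {A : Fin k → Fin m → ℕ}
    (p : Fin m → ℝ) (hp : ∀ j, 0 < p j)
    (hbal : ∑ i : Fin k, (d i : ℝ) = ∑ j : Fin m, p j * (n j : ℝ))
    (W : ∀ i : Fin k, ∀ j : Fin m, Fin (A i j) → Matrix (Fin (n j)) (Fin (d i)) ℝ)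
    (h1 : ∀ i, MM p W 1 i = 1)
    (hle : ∀ Z : ∀ j : Fin m, Matrix (Fin (n j)) (Fin (n j)) ℝ, (∀ j, (Z j).PosDef) →
      ∏ j, (Z j).det ^ (p j) ≤ ∏ i, (MM p W Z i).det) : IsGeometric p W := by
  let Q : ∀ j : Fin m, Matrix (Fin (n j)) (Fin (n j)) ℝ :=
    fun j => ∑ i : Fin k, ∑ a : Fin (A i j), W i j a * (W i j a)ᵀ
  have hQsymm : ∀ j, (Q j)ᵀ = Q j := by
    intro j
    simp [Q, transpose_sum, transpose_mul]
  have key : ∀ j0 (z : Fin (n j0) → ℝ), z ⬝ᵥ z ≤ z ⬝ᵥ (Q j0 *ᵥ z) := by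
    intro j0 z
    let E : ∀ j : Fin m, Matrix (Fin (n j)) (Fin (n j)) ℝ := Pi.single j0 (vecMulVec z z)
    have hE : ∀ j, (E j).PosSemidef := by
      intro j
      by_cases hj : j = j0
      · subst hj
        simp only [E, Pi.single_eq_same]
        simpa using posSemidef_vecMulVec_self_star z
      · simp only [E, Pi.single_eq_of_ne hj]
        exact PosSemidef.zero
    have hc : 0 ≤ z ⬝ᵥ z := by simpa using dotProduct_star_self_nonneg z
    let T := ∑ i, (MM p W E i).trace
    have hT : T = p j0 * (z ⬝ᵥ (Q j0 *ᵥ z)) := by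
      have : ∀ i, (MM p W E i).trace = p j0 * ∑ a, z ⬝ᵥ ((W i j0 a * (W i j0 a)ᵀ) *ᵥ z) := by
        intro i
        simp only [MM]
        rw [Finset.sum_eq_single j0]
        · rw [trace_smul, smul_eq_mul, trace_sum]
          congr 1
          refine Finset.sum_congr rfl fun a _ => ?_
          simp only [E, Pi.single_eq_same]
          rw [mul_vecMulVec, vecMulVec_mul, trace_vecMulVec, ← mulVec_mulVec,
            dotProduct_mulVec z, dotProduct_comm]
        · intro j _ hj
          simp [E, Pi.single_eq_of_ne hj]
        · simp
      simp only [T, this, ← Finset.mul_sum, Q, Matrix.sum_mulVec, dotProduct_sum]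
    have hTn : 0 ≤ T := Finset.sum_nonneg fun i _ => (MM_posSemidef p hp W E hE i).trace_nonneg
    have ineq : ∀ ε : ℝ, 0 < ε → p j0 * (z ⬝ᵥ z) ≤ T + ε * ((z ⬝ᵥ z) * T) := by
      intro ε hε
      have hPD : ∀ j, ((1 + ε • E : ∀ j : Fin m, Matrix (Fin (n j)) (Fin (n j)) ℝ) j).PosDef :=
        fun j => PosDef.one.add_posSemidef ((hE j).smul hε.le)
      have h2 := hle _ hPD
      have hMM : ∀ i, MM p W (1 + ε • E) i = 1 + ε • MM p W E i := by
        intro i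
        rw [← h1 i]
        simp only [MM, Pi.add_apply, Pi.smul_apply, Matrix.mul_add, Matrix.add_mul,
          Finset.sum_add_distrib, smul_add, Finset.smul_sum, Matrix.mul_smul, Matrix.smul_mul]
        congr 1
        refine Finset.sum_congr rfl fun j _ => Finset.sum_congr rfl fun a _ => ?_
        rw [smul_comm]
      have h3 : ∏ i, (MM p W (1 + ε • E) i).det ≤ Real.exp (ε * T) := by
        simp only [T, Finset.mul_sum]
        rw [Real.exp_sum]
        refine Finset.prod_le_prod
          (fun i _ => (MM_posSemidef p hp W _ (fun j => (hPD j).posSemidef) i).det_nonneg)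
          fun i _ => ?_
        have h4 := MM_posSemidef p hp W _ (fun j => (hPD j).posSemidef) i
        rw [hMM] at h4 ⊢
        have := det_le_exp_trace _ h4
        rwa [trace_smul, smul_eq_mul] at this
      have hdet : ∏ j, ((1 + ε • E : ∀ j : Fin m, Matrix (Fin (n j)) (Fin (n j)) ℝ) j).det ^ (p j)
          = (1 + ε * (z ⬝ᵥ z)) ^ (p j0) := by
        rw [Finset.prod_eq_single j0]
        · congr 1
          simp only [E, Pi.add_apply, Pi.smul_apply, Pi.single_eq_same, Pi.one_apply]
          rw [← smul_vecMulVec, vecMulVec_eq Unit, det_one_add_replicateCol_mul_replicateRow,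
            dotProduct_smul, smul_eq_mul]
        · intro j _ hj
          simp [E, Pi.single_eq_of_ne hj]
        · simp
      rw [hdet] at h2
      have h5 := h2.trans h3
      have hpos : 0 < 1 + ε * (z ⬝ᵥ z) := by positivity
      have h6 := Real.log_le_log (Real.rpow_pos_of_pos hpos _) h5
      rw [Real.log_exp, Real.log_rpow hpos] at h6
      have h7 := Real.one_sub_inv_le_log_of_pos hpos
      have h8 : p j0 * (1 - (1 + ε * (z ⬝ᵥ z))⁻¹) ≤ ε * T :=
        (mul_le_mul_of_nonneg_left h7 (hp j0).le).trans h6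
      have h9 : 1 - (1 + ε * (z ⬝ᵥ z))⁻¹ = ε * (z ⬝ᵥ z) / (1 + ε * (z ⬝ᵥ z)) := by
        field_simp
        ring
      rw [h9, ← mul_div_assoc, div_le_iff₀ hpos] at h8
      nlinarith
    have h10 : p j0 * (z ⬝ᵥ z) ≤ T := by
      refine le_of_forall_pos_le_add fun δ hδ => ?_
      have hden : 0 < (z ⬝ᵥ z) * T + 1 := by positivity
      have := ineq (δ / ((z ⬝ᵥ z) * T + 1)) (by positivity)
      refine this.trans ?_
      have : δ / ((z ⬝ᵥ z) * T + 1) * ((z ⬝ᵥ z) * T) ≤ δ := by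
        rw [div_mul_eq_mul_div, div_le_iff₀ hden]
        nlinarith
      linarith
    rw [hT] at h10
    exact le_of_mul_le_mul_left h10 (hp j0)
  have hPSD : ∀ j, (Q j - 1).PosSemidef := by
    intro j
    refine PosSemidef.of_dotProduct_mulVec_nonneg ?_ fun z => ?_
    · have : (Q j).IsHermitian := by
        rw [IsHermitian, conjTranspose_eq_transpose_of_trivial]; exact hQsymm j
      exact this.sub isHermitian_one
    · have := key j z
      rw [Matrix.sub_mulVec, dotProduct_sub, one_mulVec]
      simpa using this
  have htr : ∑ j, p j * (Q j - 1).trace = 0 := by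
    have e1 : ∀ j, p j * (Q j - 1).trace = p j * (Q j).trace - p j * (n j : ℝ) := by
      intro j
      rw [trace_sub, trace_one]; simp [mul_sub]
    simp only [e1, Finset.sum_sub_distrib]
    rw [← hbal, sub_eq_zero]
    have e2 : ∀ i, (d i : ℝ) = ∑ j, p j * ∑ a, (W i j a * (W i j a)ᵀ).trace := by
      intro i
      have := congrArg Matrix.trace (h1 i)
      rw [trace_one, Fintype.card_fin] at this
      rw [← this]
      simp only [MM, trace_sum, trace_smul, smul_eq_mul, Pi.one_apply, Matrix.mul_one]
      refine Finset.sum_congr rfl fun j _ => ?_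
      congr 1
      exact Finset.sum_congr rfl fun a _ => trace_mul_comm _ _
    simp only [e2]
    rw [Finset.sum_comm]
    refine Finset.sum_congr rfl fun j _ => ?_
    simp only [Q, trace_sum, Finset.mul_sum]
  refine ⟨fun i => by simpa only [MM, Pi.one_apply, Matrix.mul_one] using h1 i, fun j => ?_⟩
  have h0 := (Finset.sum_eq_zero_iff_of_nonneg
    (fun j _ => mul_nonneg (hp j).le (hPSD j).trace_nonneg)).1 htr j (Finset.mem_univ j)
  have h0' : (Q j - 1).trace = 0 := by
    rcases mul_eq_zero.1 h0 with h | h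
    · exact absurd h (hp j).ne'
    · exact h
  exact sub_eq_zero.1 ((hPSD j).trace_eq_zero_iff.1 h0')

theorem geometrizable_of_min {k m : ℕ} {d : Fin k → ℕ} {n : Fin m → ℕ} {A : Fin k → Fin m → ℕ}
    (p : Fin m → ℝ) (hp : ∀ j, 0 < p j)
    (hbal : ∑ i : Fin k, (d i : ℝ) = ∑ j : Fin m, p j * (n j : ℝ))
    (V : ∀ i : Fin k, ∀ j : Fin m, Fin (A i j) → Matrix (Fin (n j)) (Fin (d i)) ℝ)
    (Y : ∀ j : Fin m, Matrix (Fin (n j)) (Fin (n j)) ℝ) (hY : ∀ j, (Y j).PosDef)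
    (hpos : 0 < capVal p V Y)
    (hmin : ∀ Z : ∀ j : Fin m, Matrix (Fin (n j)) (Fin (n j)) ℝ, (∀ j, (Z j).PosDef) →
      capVal p V Y ≤ capVal p V Z) :
    ∃ (G : ∀ i : Fin k, Matrix (Fin (d i)) (Fin (d i)) ℝ)
      (h : ∀ j : Fin m, Matrix (Fin (n j)) (Fin (n j)) ℝ),
      (∀ i, IsUnit (G i).det) ∧ (∀ j, IsUnit (h j).det) ∧
      IsGeometric p (fun i j a => h j * V i j a * G i) := by
  have hMpsd := fun i => MM_posSemidef p hp V Y (fun j => (hY j).posSemidef) i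
  have hMPD : ∀ i, (MM p V Y i).PosDef := by
    intro i
    rw [(hMpsd i).posDef_iff_det_ne_zero]
    intro h0
    rw [capVal_eq, Finset.prod_eq_zero (Finset.mem_univ i) h0, zero_div] at hpos
    exact lt_irrefl _ hpos
  choose h hh hhY using fun j => posDef_factor (Y j) (hY j)
  choose K hK hKM using fun i => posDef_factor _ (hMPD i)
  have hG : ∀ i, IsUnit ((K i)⁻¹).det := fun i => isUnit_nonsing_inv_det _ (hK i)
  refine ⟨fun i => (K i)⁻¹, h, hG, hh, ?_⟩
  obtain ⟨c, hc, hcap⟩ := capVal_transform p V (fun i => (K i)⁻¹) h hG hh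
  have hY' : (fun j => (h j)ᵀ * (1 : ∀ j : Fin m, Matrix (Fin (n j)) (Fin (n j)) ℝ) j * h j) = Y := by
    funext j; simp [hhY]
  have hone : ∀ i, MM p (fun i j a => h j * V i j a * (K i)⁻¹) 1 i = 1 := by
    intro i
    rw [MM_transform p V (fun i => (K i)⁻¹), hY', ← hKM]
    calc _ = (K i * (K i)⁻¹)ᵀ * (K i * (K i)⁻¹) := by
          simp only [transpose_mul, Matrix.mul_assoc]
      _ = 1 := by rw [mul_nonsing_inv _ (hK i)]; simp
  refine geometric_of_le p hp hbal _ hone fun Z hZ => ?_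
  have h3 : (0:ℝ) < ∏ j, ((Z j).det) ^ (p j) :=
    Finset.prod_pos fun j _ => Real.rpow_pos_of_pos (hZ j).det_pos _
  rw [← one_le_div h3, ← capVal_eq, hcap Z hZ]
  have e1 : capVal p (fun i j a => h j * V i j a * (K i)⁻¹) 1 = 1 := by
    rw [capVal_eq]; simp [hone]
  rw [← e1, hcap 1 (fun j => PosDef.one), hY']
  exact mul_le_mul_of_nonneg_left (hmin _ fun j => posDef_conj _ _ (hZ j) (hh j)) hc.le


/-- A real matrix with trivial kernel has a nonsingular maximal square submatrix. -/
theorem exists_rows_det_ne_zero {E : Type} [Fintype E] {d : ℕ} (R : Matrix E (Fin d) ℝ)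
    (hR : ∀ x, R *ᵥ x = 0 → x = 0) : ∃ S : Fin d → E, (R.submatrix S id).det ≠ 0 := by
  classical
  obtain ⟨κ, a, ha, hspan, hli⟩ := exists_linearIndependent' ℝ R.row
  have hcol : LinearIndependent ℝ R.col := by
    rw [← Matrix.mulVec_injective_iff]
    intro x y hxy
    have := hR (x - y) (by rw [mulVec_sub]; exact sub_eq_zero.2 hxy)
    exact sub_eq_zero.1 this
  have hrank : R.rank = d := by
    rw [rank_eq_finrank_span_cols, finrank_span_eq_card hcol, Fintype.card_fin]
  rw [rank_eq_finrank_span_row] at hrank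
  have : Fintype κ := Fintype.ofInjective a ha
  have hcard : Fintype.card κ = d := by
    rw [← hrank, ← hspan, finrank_span_eq_card hli]
  let e := Fintype.equivFinOfCardEq hcard
  refine ⟨fun s => a (e.symm s), ?_⟩
  have : LinearIndependent ℝ (R.submatrix (fun s => a (e.symm s)) id).row :=
    hli.comp _ e.symm.injective
  rw [linearIndependent_rows_iff_isUnit, isUnit_iff_isUnit_det] at this
  exact this.ne_zero

theorem one_le_det_one_add {ι : Type*} [Fintype ι] [DecidableEq ι] (P : Matrix ι ι ℝ)
    (hP : P.PosSemidef) : 1 ≤ (1 + P).det := by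
  obtain ⟨U, l, h1, h2, h3, -, -, h5⟩ := spectral_real P hP.isHermitian
  have : 1 + P = U * diagonal (fun r => 1 + l r) * Uᵀ := by
    have e : diagonal (fun r => 1 + l r) = 1 + diagonal l := by
      rw [← diagonal_one, diagonal_add]
    rw [e, Matrix.mul_add, Matrix.add_mul, ← h3, Matrix.mul_one, h2]
  rw [this, det_mul_comm, ← Matrix.mul_assoc, h1, Matrix.one_mul, det_diagonal]
  exact Finset.one_le_prod fun r => by simpa using h5 hP r

theorem det_le_det_add {ι : Type*} [Fintype ι] [DecidableEq ι] (N P : Matrix ι ι ℝ)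
    (hN : N.PosSemidef) (hP : P.PosSemidef) : N.det ≤ (N + P).det := by
  by_cases h0 : N.det = 0
  · rw [h0]; exact (hN.add hP).det_nonneg
  · obtain ⟨K, hK, hKN⟩ := posDef_factor N (hN.posDef_iff_det_ne_zero.2 h0)
    have e : N + P = Kᵀ * (1 + (K⁻¹)ᵀ * P * K⁻¹) * K := by
      rw [Matrix.mul_add, Matrix.add_mul, Matrix.mul_one, hKN]
      congr 1
      calc P = (K⁻¹ * K)ᵀ * P * (K⁻¹ * K) := by rw [nonsing_inv_mul _ hK]; simp
        _ = _ := by simp only [transpose_mul, Matrix.mul_assoc]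
    have h1 : 1 ≤ (1 + (K⁻¹)ᵀ * P * K⁻¹).det := one_le_det_one_add _ (by
      simpa [conjTranspose_eq_transpose_of_trivial] using hP.conjTranspose_mul_mul_same K⁻¹)
    have h2 : N.det = K.det * K.det := by rw [← hKN, det_mul, det_transpose]
    rw [e, det_mul, det_mul, det_transpose, h2]
    nlinarith [mul_self_nonneg K.det]

theorem det_gram_ge {E : Type} [Fintype E] [DecidableEq E] {d : ℕ} (R : Matrix E (Fin d) ℝ)
    (D : E → ℝ) (hD : ∀ e, 0 ≤ D e) (S : Fin d → E) (hS : (R.submatrix S id).det ≠ 0) :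
    (∏ s, D (S s)) * (R.submatrix S id).det ^ 2 ≤ (Rᵀ * diagonal D * R).det := by
  classical
  have hinj : Function.Injective S := by
    intro s t hst
    by_contra hne
    exact hS (det_zero_of_row_eq hne (by funext c; simp [hst]))
  let D1 : E → ℝ := fun e => if e ∈ Set.range S then D e else 0
  let D2 : E → ℝ := fun e => if e ∈ Set.range S then 0 else D e
  have hD12 : diagonal D = diagonal D1 + diagonal D2 := by
    rw [diagonal_add]
    congr; funext e
    by_cases h : e ∈ Set.range S
    · simp only [D1, D2, if_pos h, add_zero]
    · simp only [D1, D2, if_neg h, zero_add]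
  have e1 : Rᵀ * diagonal D1 * R =
      (R.submatrix S id)ᵀ * diagonal (D ∘ S) * (R.submatrix S id) := by
    ext x y
    rw [Matrix.mul_apply, Matrix.mul_apply]
    simp only [mul_diagonal, transpose_apply, submatrix_apply, id, Function.comp]
    have : ∀ s, R (S s) x * D (S s) * R (S s) y = (fun e => R e x * D1 e * R e y) (S s) := by
      intro s; simp [D1]
    simp only [this]
    rw [← Finset.sum_image (s := Finset.univ) (g := S) (f := fun e => R e x * D1 e * R e y)
      (fun a _ b _ h => hinj h)]
    symm
    apply Finset.sum_subset (Finset.subset_univ _)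
    intro e _ he
    have : e ∉ Set.range S := by simpa using he
    simp only [D1, if_neg this]; ring
  have hpsd : ∀ D' : E → ℝ, (∀ e, 0 ≤ D' e) → (Rᵀ * diagonal D' * R).PosSemidef := by
    intro D' hD'
    simpa [conjTranspose_eq_transpose_of_trivial] using
      (PosSemidef.diagonal hD').conjTranspose_mul_mul_same R
  have h1 : ∀ e, 0 ≤ D1 e := fun e => by simp only [D1]; split_ifs; exacts [hD e, le_rfl]
  have h2 : ∀ e, 0 ≤ D2 e := fun e => by simp only [D2]; split_ifs; exacts [le_rfl, hD e]
  rw [hD12, Matrix.mul_add, Matrix.add_mul]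
  refine le_trans (le_of_eq ?_) (det_le_det_add _ _ (hpsd D1 h1) (hpsd D2 h2))
  rw [e1, det_mul, det_mul, det_diagonal, det_transpose]
  simp only [Function.comp]
  ring

/-- Greedy choice of a maximal weight nonsingular square submatrix. -/
theorem exists_greedy {E : Type} [Fintype E] {d : ℕ} (R : Matrix E (Fin d) ℝ)
    (hR : ∀ x, R *ᵥ x = 0 → x = 0) (θ : E → ℝ) :
    ∃ S : Fin d → E, (R.submatrix S id).det ≠ 0 ∧
      ∀ e s, (R * (R.submatrix S id)⁻¹) e s ≠ 0 → θ e ≤ θ (S s) := by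
  classical
  obtain ⟨S0, hS0⟩ := exists_rows_det_ne_zero R hR
  obtain ⟨S, hSm, hmax⟩ := Finset.exists_max_image
    (Finset.univ.filter fun S : Fin d → E => (R.submatrix S id).det ≠ 0)
    (fun S => ∑ s, θ (S s)) ⟨S0, by simpa using hS0⟩
  have hS : (R.submatrix S id).det ≠ 0 := by simpa using hSm
  refine ⟨S, hS, fun e s hes => ?_⟩
  set B := R.submatrix S id with hB
  set C := R * B⁻¹ with hC
  have hCB : C * B = R := by
    rw [hC, Matrix.mul_assoc, nonsing_inv_mul _ (isUnit_iff_ne_zero.2 hS), Matrix.mul_one]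
  have hrow : R e = ∑ s', C e s' • B s' := by
    funext c
    rw [← hCB]
    simp [Matrix.mul_apply]
  have hupd : R.submatrix (Function.update S s e) id = B.updateRow s (∑ s', C e s' • B s') := by
    rw [← hrow]
    ext x y
    by_cases hx : x = s
    · subst hx; simp
    · simp [hx, hB]
  have h1 := hmax (Function.update S s e) (by
    simp only [Finset.mem_filter, Finset.mem_univ, true_and]
    rw [hupd, det_updateRow_sum]
    exact smul_ne_zero hes hS)
  rw [← Finset.add_sum_erase _ _ (Finset.mem_univ s),
    ← Finset.add_sum_erase (f := fun s => θ (S s)) _ (Finset.mem_univ s)] at h1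
  have h2 : ∑ x ∈ Finset.univ.erase s, θ (Function.update S s e x) =
      ∑ x ∈ Finset.univ.erase s, θ (S x) := by
    refine Finset.sum_congr rfl fun x hx => ?_
    rw [Function.update_of_ne (Finset.ne_of_mem_erase hx)]
  rw [h2, Function.update_self] at h1
  linarith

theorem integral_ind (a b x : ℝ) (hax : a ≤ x) (hxb : x ≤ b) :
    ∫ τ in a..b, (if x ≤ τ then (1:ℝ) else 0) = b - x := by
  have hmono : Monotone (fun τ : ℝ => if x ≤ τ then (1:ℝ) else 0) := by
    intro s t hst
    dsimp only
    split_ifs <;> first | linarith | norm_num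
  rw [← intervalIntegral.integral_add_adjacent_intervals (b := x) hmono.intervalIntegrable
    hmono.intervalIntegrable]
  have h1 : ∫ τ in a..x, (if x ≤ τ then (1:ℝ) else 0) = ∫ τ in a..x, (0:ℝ) := by
    apply intervalIntegral.integral_congr_ae
    have : ∀ᵐ τ : ℝ, τ ≠ x := MeasureTheory.Measure.ae_ne _ x
    filter_upwards [this] with τ hτ hmem
    rw [Set.uIoc_of_le hax] at hmem
    rw [if_neg]
    intro h
    exact hτ (le_antisymm hmem.2 h)
  have h2 : ∫ τ in x..b, (if x ≤ τ then (1:ℝ) else 0) = ∫ τ in x..b, (1:ℝ) := by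
    apply intervalIntegral.integral_congr
    intro τ hτ
    rw [Set.uIcc_of_le hxb] at hτ
    simp [hτ.1]
  rw [h1, h2]
  simp

/-- Abel summation: if a weighted finite family is dominated at every threshold level
then its weighted sum is positive. -/
theorem abel_pos {ι : Type*} [Fintype ι] (q x : ι → ℝ) (hq : ∑ t, q t = 0) (a b : ℝ) (hab : a < b)
    (hx : ∀ t, a ≤ x t ∧ x t ≤ b)
    (hlt : ∀ τ, a ≤ τ → τ < b → ∑ t, q t * (if x t ≤ τ then (1:ℝ) else 0) < 0) :
    0 < ∑ t, q t * x t := by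
  have hint : ∀ t, IntervalIntegrable (fun τ => q t * (if x t ≤ τ then (1:ℝ) else 0))
      MeasureTheory.volume a b := by
    intro t
    apply IntervalIntegrable.const_mul
    apply Monotone.intervalIntegrable
    intro s t hst
    dsimp only
    split_ifs <;> first | linarith | norm_num
  have h1 : ∫ τ in a..b, ∑ t, q t * (if x t ≤ τ then (1:ℝ) else 0) = ∑ t, q t * (b - x t) := by
    rw [intervalIntegral.integral_finsetSum (fun t _ => hint t)]
    refine Finset.sum_congr rfl fun t _ => ?_
    rw [intervalIntegral.integral_const_mul, integral_ind a b _ (hx t).1 (hx t).2]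
  have h2 : 0 < ∫ τ in a..b, -∑ t, q t * (if x t ≤ τ then (1:ℝ) else 0) := by
    apply intervalIntegral.intervalIntegral_pos_of_pos_on _ _ hab
    · have := (IntervalIntegrable.sum Finset.univ fun t _ => hint t).neg
      convert this using 1
      funext τ
      simp
    · intro τ hτ
      have := hlt τ hτ.1.le hτ.2
      linarith
  rw [intervalIntegral.integral_neg, h1] at h2
  have h3 : ∑ t, q t * (b - x t) = (∑ t, q t) * b - ∑ t, q t * x t := by
    rw [Finset.sum_mul, ← Finset.sum_sub_distrib]
    exact Finset.sum_congr rfl fun t _ => by ring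
  rw [h3, hq] at h2
  linarith


theorem Stable.semistable {k m : ℕ} {d : Fin k → ℕ} {n : Fin m → ℕ} {A : Fin k → Fin m → ℕ}
    {p : Fin m → ℝ}
    {W : ∀ i : Fin k, ∀ j : Fin m, Fin (A i j) → Matrix (Fin (n j)) (Fin (d i)) ℝ}
    (hW : Stable p W)
    (U1 : ∀ i : Fin k, Submodule ℝ (Fin (d i) → ℝ))
    (U2 : ∀ j : Fin m, Submodule ℝ (Fin (n j) → ℝ))
    (hU : ∀ i j a, (U1 i).map (W i j a).mulVecLin ≤ U2 j) :
    ∑ i : Fin k, (Module.finrank ℝ (U1 i) : ℝ) ≤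
      ∑ j : Fin m, p j * (Module.finrank ℝ (U2 j) : ℝ) := by
  by_cases h1 : (∀ i, U1 i = ⊥) ∧ (∀ j, U2 j = ⊥)
  · have e1 : ∀ i, Module.finrank ℝ (U1 i) = 0 := fun i => by rw [h1.1 i]; exact finrank_bot ..
    have e2 : ∀ j, Module.finrank ℝ (U2 j) = 0 := fun j => by rw [h1.2 j]; exact finrank_bot ..
    simp [e1, e2]
  by_cases h2 : (∀ i, U1 i = ⊤) ∧ (∀ j, U2 j = ⊤)
  · have := hW.2.1
    have e1 : ∀ i, Module.finrank ℝ (U1 i) = d i := fun i => by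
      rw [h2.1 i, finrank_top, Module.finrank_fin_fun]
    have e2 : ∀ j, Module.finrank ℝ (U2 j) = n j := fun j => by
      rw [h2.2 j, finrank_top, Module.finrank_fin_fun]
    simp only [e1, e2, this, le_refl]
  exact (hW.2.2 U1 U2 hU h1 h2).le

/-- The matrix of all rows `V_aᵀ u_{jr}`. -/
noncomputable def RR {k m : ℕ} {d : Fin k → ℕ} {n : Fin m → ℕ} {A : Fin k → Fin m → ℕ}
    (X : ∀ i : Fin k, ∀ j : Fin m, Fin (A i j) → Matrix (Fin (n j)) (Fin (d i)) ℝ)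
    (U : ∀ j : Fin m, Matrix (Fin (n j)) (Fin (n j)) ℝ) (i : Fin k) :
    Matrix (Σ j : Fin m, Fin (A i j) × Fin (n j)) (Fin (d i)) ℝ :=
  Matrix.of fun e c => ((U e.1)ᵀ * X i e.1 e.2.1) e.2.2 c

theorem RR_ker {k m : ℕ} {d : Fin k → ℕ} {n : Fin m → ℕ} {A : Fin k → Fin m → ℕ}
    (p : Fin m → ℝ)
    (X : ∀ i : Fin k, ∀ j : Fin m, Fin (A i j) → Matrix (Fin (n j)) (Fin (d i)) ℝ)
    (hX : Stable p X)
    (U : ∀ j : Fin m, Matrix (Fin (n j)) (Fin (n j)) ℝ) (hU : ∀ j, (U j)ᵀ * U j = 1) (i : Fin k)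
    (x : Fin (d i) → ℝ) (hx : RR X U i *ᵥ x = 0) : x = 0 := by
  have hU' : ∀ j, U j * (U j)ᵀ = 1 := fun j => mul_eq_one_comm.1 (hU j)
  have h1 : ∀ j a, X i j a *ᵥ x = 0 := by
    intro j a
    have h2 : (U j)ᵀ *ᵥ (X i j a *ᵥ x) = 0 := by
      funext r
      have := congrFun hx ⟨j, a, r⟩
      rw [mulVec_mulVec]
      exact this
    have := congrArg (fun v => U j *ᵥ v) h2
    simpa [mulVec_mulVec, hU', ← Matrix.mul_assoc] using this
  let U1 : ∀ i : Fin k, Submodule ℝ (Fin (d i) → ℝ) :=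
    fun i => ⨅ j, ⨅ a, LinearMap.ker (X i j a).mulVecLin
  have h3 := hX.semistable U1 (fun j => ⊥) (by
    intro i j a
    rw [Submodule.map_le_iff_le_comap]
    exact (iInf_le _ j).trans (iInf_le _ a))
  simp only [finrank_bot, Nat.cast_zero, mul_zero, Finset.sum_const_zero] at h3
  have h4 := (Finset.sum_eq_zero_iff_of_nonneg (fun i _ => Nat.cast_nonneg _)).1
    (le_antisymm h3 (Finset.sum_nonneg fun i _ => Nat.cast_nonneg _)) i (Finset.mem_univ i)
  have h5 : U1 i = ⊥ := Submodule.finrank_eq_zero.1 (by exact_mod_cast h4)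
  have h6 : x ∈ U1 i := by
    simp only [U1, Submodule.mem_iInf, LinearMap.mem_ker, mulVecLin_apply]
    exact h1
  rw [h5] at h6
  simpa using h6

theorem MM_eq_gram {k m : ℕ} {d : Fin k → ℕ} {n : Fin m → ℕ} {A : Fin k → Fin m → ℕ}
    (p : Fin m → ℝ)
    (X : ∀ i : Fin k, ∀ j : Fin m, Fin (A i j) → Matrix (Fin (n j)) (Fin (d i)) ℝ)
    (U : ∀ j : Fin m, Matrix (Fin (n j)) (Fin (n j)) ℝ) (l : (Σ j : Fin m, Fin (n j)) → ℝ)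
    (i : Fin k) :
    MM p X (fun j => U j * diagonal (fun r => l ⟨j, r⟩) * (U j)ᵀ) i =
      (RR X U i)ᵀ * (diagonal (fun e : (Σ j : Fin m, Fin (A i j) × Fin (n j)) =>
        p e.1 * l ⟨e.1, e.2.2⟩) : Matrix (Σ j : Fin m, Fin (A i j) × Fin (n j))
          (Σ j : Fin m, Fin (A i j) × Fin (n j)) ℝ) * RR X U i := by
  ext x y
  have h1 : ∀ j a, (X i j a)ᵀ * (U j * diagonal (fun r => l ⟨j, r⟩) * (U j)ᵀ) * X i j a =
      ((U j)ᵀ * X i j a)ᵀ * diagonal (fun r => l ⟨j, r⟩) * ((U j)ᵀ * X i j a) := by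
    intro j a
    simp only [transpose_mul, transpose_transpose, Matrix.mul_assoc]
  simp only [MM, h1]
  generalize hN : (fun j a => (U j)ᵀ * X i j a) = N
  have hN' : ∀ j a, (U j)ᵀ * X i j a = N j a := fun j a => by rw [← hN]
  simp only [hN', Matrix.sum_apply, Matrix.smul_apply]
  rw [Matrix.mul_apply]
  simp only [mul_diagonal, transpose_apply, RR, of_apply, hN']
  rw [Fintype.sum_sigma]
  refine Finset.sum_congr rfl fun j _ => ?_
  rw [Fintype.sum_prod_type, smul_eq_mul, Finset.mul_sum]
  refine Finset.sum_congr rfl fun a _ => ?_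
  rw [Matrix.mul_apply, Finset.mul_sum]
  refine Finset.sum_congr rfl fun r _ => ?_
  simp only [mul_diagonal, transpose_apply]
  ring

theorem finrank_span_sub {ι : Type*} {M : Type*} [AddCommGroup M] [Module ℝ M] [Fintype ι]
    (v : ι → M) (hv : LinearIndependent ℝ v) (P : ι → Prop) [DecidablePred P] :
    (Module.finrank ℝ (Submodule.span ℝ (v '' {s | P s})) : ℝ) =
      ∑ s, (if P s then (1:ℝ) else 0) := by
  classical
  have h1 : LinearIndependent ℝ (fun s : {s // P s} => v s) := hv.comp _ Subtype.val_injective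
  have h2 : v '' {s | P s} = Set.range (fun s : {s // P s} => v s) := by
    ext x; simp
  rw [h2, finrank_span_eq_card h1, Fintype.card_subtype]
  simp

theorem exists_S {k m : ℕ} {d : Fin k → ℕ} {n : Fin m → ℕ} {A : Fin k → Fin m → ℕ}
    (p : Fin m → ℝ)
    (X : ∀ i : Fin k, ∀ j : Fin m, Fin (A i j) → Matrix (Fin (n j)) (Fin (d i)) ℝ)
    (hX : Stable p X)
    (U : ∀ j : Fin m, Matrix (Fin (n j)) (Fin (n j)) ℝ) (hU : ∀ j, (U j)ᵀ * U j = 1)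
    (θ : (Σ j : Fin m, Fin (n j)) → ℝ) (hθ : ∃ x y, θ x < θ y) :
    ∃ S : ∀ i, Fin (d i) → (Σ j : Fin m, Fin (A i j) × Fin (n j)),
      (∀ i, ((RR X U i).submatrix (S i) id).det ≠ 0) ∧
      0 < ∑ i, ∑ s, θ ⟨(S i s).1, (S i s).2.2⟩ - ∑ x, p x.1 * θ x := by
  have hU' : ∀ j, U j * (U j)ᵀ = 1 := fun j => mul_eq_one_comm.1 (hU j)
  choose S hS hgreedy using fun i => exists_greedy (RR X U i) (RR_ker p X hX U hU i)
    (fun e => θ ⟨e.1, e.2.2⟩)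
  refine ⟨S, hS, ?_⟩
  obtain ⟨x0, y0, hxy⟩ := hθ
  have : Nonempty (Σ j : Fin m, Fin (n j)) := ⟨x0⟩
  obtain ⟨xa, hxa⟩ := Finite.exists_min θ
  obtain ⟨xb, hxb⟩ := Finite.exists_max θ
  let q : (Σ i, Fin (d i)) ⊕ (Σ j : Fin m, Fin (n j)) → ℝ := Sum.elim (fun _ => 1) (fun x => - p x.1)
  let y : (Σ i, Fin (d i)) ⊕ (Σ j : Fin m, Fin (n j)) → ℝ :=
    Sum.elim (fun z => θ ⟨(S z.1 z.2).1, (S z.1 z.2).2.2⟩) θ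
  have hbal := hX.2.1
  have main := abel_pos q y (by
    rw [Fintype.sum_sum_type]
    simp only [q, Sum.elim_inl, Sum.elim_inr]
    rw [Fintype.sum_sigma, Fintype.sum_sigma]
    simp only [Finset.sum_const, Finset.card_univ, Fintype.card_fin, nsmul_eq_mul, mul_one]
    rw [hbal, ← Finset.sum_add_distrib]
    exact Finset.sum_eq_zero fun j _ => by ring) (θ xa) (θ xb)
    ((hxa x0).trans_lt (hxy.trans_le (hxb y0)))
    (by rintro (z | z) <;> exact ⟨hxa _, hxb _⟩)
    (by
      intro τ hτa hτb
      rw [Fintype.sum_sum_type]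
      simp only [q, y, Sum.elim_inl, Sum.elim_inr]
      rw [Fintype.sum_sigma, Fintype.sum_sigma]
      simp only [one_mul, neg_mul, Finset.sum_neg_distrib, ← Finset.mul_sum]
      let B := fun i => (RR X U i).submatrix (S i) id
      have hB : ∀ i, IsUnit (B i).det := fun i => isUnit_iff_ne_zero.2 (hS i)
      have hBli : ∀ i, LinearIndependent ℝ ((B i)⁻¹).col := fun i =>
        linearIndependent_cols_of_isUnit
          ((isUnit_iff_isUnit_det _).2 (isUnit_nonsing_inv_det _ (hB i)))
      have hUli : ∀ j, LinearIndependent ℝ (U j).col := fun j =>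
        linearIndependent_cols_of_isUnit (IsUnit.of_mul_eq_one _ (hU' j))
      let U1 : ∀ i : Fin k, Submodule ℝ (Fin (d i) → ℝ) := fun i =>
        Submodule.span ℝ (((B i)⁻¹).col '' {s | θ ⟨(S i s).1, (S i s).2.2⟩ ≤ τ})
      let U2 : ∀ j : Fin m, Submodule ℝ (Fin (n j) → ℝ) := fun j =>
        Submodule.span ℝ ((U j).col '' {r | θ ⟨j, r⟩ ≤ τ})
      have hr1 : ∀ i, (Module.finrank ℝ (U1 i) : ℝ) = _ := fun i =>
        finrank_span_sub _ (hBli i) (fun s => θ ⟨(S i s).1, (S i s).2.2⟩ ≤ τ)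
      have hr2 : ∀ j, (Module.finrank ℝ (U2 j) : ℝ) = _ := fun j =>
        finrank_span_sub _ (hUli j) (fun r => θ ⟨j, r⟩ ≤ τ)
      have hinv : ∀ i j a, (U1 i).map (X i j a).mulVecLin ≤ U2 j := by
        intro i j a
        rw [Submodule.map_span_le]
        rintro _ ⟨s, hs, rfl⟩
        have e1 : (X i j a).mulVecLin (((B i)⁻¹).col s) =
            ∑ r, (RR X U i * (B i)⁻¹) ⟨j, a, r⟩ s • (U j).col r := by
          have e2 : X i j a * (B i)⁻¹ = U j * ((U j)ᵀ * X i j a * (B i)⁻¹) := by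
            rw [← Matrix.mul_assoc, ← Matrix.mul_assoc, hU', Matrix.one_mul]
          funext c
          have e3 : (X i j a).mulVecLin (((B i)⁻¹).col s) c = (X i j a * (B i)⁻¹) c s := rfl
          rw [e3, e2, Matrix.mul_apply]
          simp only [Finset.sum_apply, Pi.smul_apply, smul_eq_mul, col_apply]
          refine Finset.sum_congr rfl fun r _ => ?_
          rw [mul_comm]
          rfl
        rw [e1]
        refine Submodule.sum_mem _ fun r _ => ?_
        by_cases hz : (RR X U i * (B i)⁻¹) ⟨j, a, r⟩ s = 0
        · rw [hz, zero_smul]; exact Submodule.zero_mem _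
        · refine Submodule.smul_mem _ _ (Submodule.subset_span ⟨r, ?_, rfl⟩)
          exact (hgreedy i ⟨j, a, r⟩ s hz).trans hs
      have hst := hX.2.2 U1 U2 hinv (by
        rintro ⟨-, h2⟩
        have : (U xa.1).col xa.2 ∈ U2 xa.1 := Submodule.subset_span ⟨xa.2, hτa, rfl⟩
        rw [h2] at this
        exact (hUli xa.1).ne_zero xa.2 (by simpa using this)) (by
        rintro ⟨-, h2⟩
        have h3 := hr2 xb.1
        rw [h2, finrank_top, Module.finrank_fin_fun] at h3
        have h4 : ∑ r, (if θ ⟨xb.1, r⟩ ≤ τ then (1:ℝ) else 0) < ∑ r : Fin (n xb.1), (1:ℝ) := by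
          refine Finset.sum_lt_sum (fun r _ => by split_ifs <;> norm_num)
            ⟨xb.2, Finset.mem_univ _, ?_⟩
          rw [if_neg (not_le.2 hτb)]
          norm_num
        simp only [Finset.sum_const, Finset.card_univ, Fintype.card_fin, nsmul_eq_mul,
          mul_one] at h4
        linarith)
      simp only [hr1, hr2] at hst
      rw [← sub_eq_add_neg]
      refine lt_of_eq_of_lt ?_ (sub_neg.2 hst)
      congr!)
  rw [Fintype.sum_sum_type] at main
  simp only [q, y, Sum.elim_inl, Sum.elim_inr] at main
  rw [Fintype.sum_sigma] at main
  simp only [one_mul, neg_mul, Finset.sum_neg_distrib] at main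
  linarith


/-- The positive definite tuple with eigenbasis `U` and log-eigenvalues `t`. -/
noncomputable def YY {m : ℕ} {n : Fin m → ℕ}
    (U : ∀ j : Fin m, Matrix (Fin (n j)) (Fin (n j)) ℝ) (t : (Σ j : Fin m, Fin (n j)) → ℝ)
    (j : Fin m) : Matrix (Fin (n j)) (Fin (n j)) ℝ :=
  U j * diagonal (fun r => Real.exp (t ⟨j, r⟩)) * (U j)ᵀ

theorem YY_posDef {m : ℕ} {n : Fin m → ℕ}
    (U : ∀ j : Fin m, Matrix (Fin (n j)) (Fin (n j)) ℝ) (hU : ∀ j, (U j)ᵀ * U j = 1)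
    (t : (Σ j : Fin m, Fin (n j)) → ℝ) (j : Fin m) : (YY U t j).PosDef := by
  have h1 : (diagonal (fun r => Real.exp (t ⟨j, r⟩)) :
      Matrix (Fin (n j)) (Fin (n j)) ℝ).PosDef :=
    PosDef.diagonal fun r => Real.exp_pos _
  have h2 : IsUnit ((U j)ᵀ).det := by
    have := congrArg Matrix.det (hU j)
    rw [det_mul, det_one] at this
    exact IsUnit.of_mul_eq_one _ this
  have := posDef_conj _ (U j)ᵀ h1 h2
  rwa [transpose_transpose] at this

theorem YY_det {m : ℕ} {n : Fin m → ℕ}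
    (U : ∀ j : Fin m, Matrix (Fin (n j)) (Fin (n j)) ℝ) (hU : ∀ j, (U j)ᵀ * U j = 1)
    (t : (Σ j : Fin m, Fin (n j)) → ℝ) (j : Fin m) :
    (YY U t j).det = Real.exp (∑ r, t ⟨j, r⟩) := by
  have := congrArg Matrix.det (hU j)
  rw [det_mul, det_one] at this
  rw [YY, det_mul, det_mul, det_diagonal, Real.exp_sum, mul_comm, ← mul_assoc, this, one_mul]

theorem YY_den {m : ℕ} {n : Fin m → ℕ} (p : Fin m → ℝ)
    (U : ∀ j : Fin m, Matrix (Fin (n j)) (Fin (n j)) ℝ) (hU : ∀ j, (U j)ᵀ * U j = 1)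
    (t : (Σ j : Fin m, Fin (n j)) → ℝ) :
    ∏ j, (YY U t j).det ^ (p j) = Real.exp (∑ x, p x.1 * t x) := by
  rw [Fintype.sum_sigma, Real.exp_sum]
  refine Finset.prod_congr rfl fun j _ => ?_
  rw [YY_det U hU, ← Real.exp_mul, Finset.sum_mul]
  congr 1
  exact Finset.sum_congr rfl fun r _ => mul_comm _ _

theorem capVal_YY_ge {k m : ℕ} {d : Fin k → ℕ} {n : Fin m → ℕ} {A : Fin k → Fin m → ℕ}
    (p : Fin m → ℝ) (hp : ∀ j, 0 < p j)
    (X : ∀ i : Fin k, ∀ j : Fin m, Fin (A i j) → Matrix (Fin (n j)) (Fin (d i)) ℝ)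
    (U : ∀ j : Fin m, Matrix (Fin (n j)) (Fin (n j)) ℝ) (hU : ∀ j, (U j)ᵀ * U j = 1)
    (t : (Σ j : Fin m, Fin (n j)) → ℝ)
    (S : ∀ i, Fin (d i) → (Σ j : Fin m, Fin (A i j) × Fin (n j)))
    (hS : ∀ i, ((RR X U i).submatrix (S i) id).det ≠ 0) :
    (∏ i, ((∏ s, p (S i s).1) * ((RR X U i).submatrix (S i) id).det ^ 2)) *
      Real.exp (∑ i, ∑ s, t ⟨(S i s).1, (S i s).2.2⟩ - ∑ x, p x.1 * t x) ≤ capVal p X (YY U t) := by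
  rw [capVal_eq]
  rw [YY_den p U hU, Real.exp_sub, ← mul_div_assoc]
  refine div_le_div_of_nonneg_right ?_ (Real.exp_pos _).le
  rw [Real.exp_sum, ← Finset.prod_mul_distrib]
  have hpn : ∀ i, 0 ≤ ∏ s, p (S i s).1 := fun i => Finset.prod_nonneg fun s _ => (hp _).le
  refine Finset.prod_le_prod (fun i _ => by have := hpn i; positivity) fun i _ => ?_
  have h1 : MM p X (YY U t) i = _ := MM_eq_gram p X U (fun x => Real.exp (t x)) i
  rw [h1]
  refine le_trans (le_of_eq ?_) (det_gram_ge (RR X U i) _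
    (fun e => (mul_pos (hp e.1) (Real.exp_pos _)).le) (S i) (hS i))
  rw [Finset.prod_mul_distrib, Real.exp_sum]
  ring

theorem isCompact_orth {m : ℕ} {n : Fin m → ℕ} :
    IsCompact {U : ∀ j : Fin m, Matrix (Fin (n j)) (Fin (n j)) ℝ | ∀ j, (U j)ᵀ * U j = 1} := by
  have h1 : IsCompact (Set.pi Set.univ (fun j : Fin m => Set.pi Set.univ (fun _ : Fin (n j) =>
      Set.pi Set.univ (fun _ : Fin (n j) => Set.Icc (-1:ℝ) 1)))) :=
    isCompact_univ_pi fun j => isCompact_univ_pi fun r => isCompact_univ_pi fun c => isCompact_Icc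
  refine IsCompact.of_isClosed_subset h1 ?_ ?_
  · have : {U : ∀ j : Fin m, Matrix (Fin (n j)) (Fin (n j)) ℝ | ∀ j, (U j)ᵀ * U j = 1} =
        ⋂ j, {U | (U j)ᵀ * U j = 1} := by ext; simp
    erw [this]
    refine isClosed_iInter fun j => isClosed_eq ?_ continuous_const
    exact ((continuous_apply j).matrix_transpose).matrix_mul (continuous_apply j)
  · intro U hU j _ r _ c _
    have h2 := congrFun (congrFun (hU j) c) c
    rw [Matrix.mul_apply, Matrix.one_apply_eq] at h2
    simp only [transpose_apply] at h2
    have h3 : U j r c * U j r c ≤ 1 := by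
      rw [← h2]
      exact Finset.single_le_sum (f := fun r => U j r c * U j r c)
        (fun r _ => mul_self_nonneg _) (Finset.mem_univ r)
    exact abs_le.1 (abs_le_one_iff_mul_self_le_one.2 h3)

theorem continuous_RR_det {k m : ℕ} {d : Fin k → ℕ} {n : Fin m → ℕ} {A : Fin k → Fin m → ℕ}
    (X : ∀ i : Fin k, ∀ j : Fin m, Fin (A i j) → Matrix (Fin (n j)) (Fin (d i)) ℝ) (i : Fin k)
    (S : Fin (d i) → (Σ j : Fin m, Fin (A i j) × Fin (n j))) :
    Continuous fun U : ∀ j : Fin m, Matrix (Fin (n j)) (Fin (n j)) ℝ =>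
      ((RR X U i).submatrix S id).det := by
  refine Continuous.matrix_det (continuous_matrix fun s c => ?_)
  have h1 : Continuous fun U : ∀ j : Fin m, Matrix (Fin (n j)) (Fin (n j)) ℝ => U (S s).1 :=
    continuous_apply (S s).1
  exact (h1.matrix_transpose.matrix_mul continuous_const).matrix_elem _ _

theorem exists_uniform {k m : ℕ} {d : Fin k → ℕ} {n : Fin m → ℕ} {A : Fin k → Fin m → ℕ}
    (p : Fin m → ℝ) (hp : ∀ j, 0 < p j)
    (X : ∀ i : Fin k, ∀ j : Fin m, Fin (A i j) → Matrix (Fin (n j)) (Fin (d i)) ℝ)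
    (hX : Stable p X) :
    ∃ c : ℝ, 0 < c ∧ ∀ U : (∀ j : Fin m, Matrix (Fin (n j)) (Fin (n j)) ℝ),
      (∀ j, (U j)ᵀ * U j = 1) → ∀ θ : (Σ j : Fin m, Fin (n j)) → ℝ, ∑ x, θ x = 0 → ‖θ‖ = 1 →
      ∃ S : ∀ i, Fin (d i) → (Σ j : Fin m, Fin (A i j) × Fin (n j)),
        c ≤ ∏ i, ((∏ s, p (S i s).1) * ((RR X U i).submatrix (S i) id).det ^ 2) ∧
        c ≤ ∑ i, ∑ s, θ ⟨(S i s).1, (S i s).2.2⟩ - ∑ x, p x.1 * θ x := by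
  classical
  let KU := {U : ∀ j : Fin m, Matrix (Fin (n j)) (Fin (n j)) ℝ | ∀ j, (U j)ᵀ * U j = 1}
  let KT : Set ((Σ j : Fin m, Fin (n j)) → ℝ) := {θ | ∑ x, θ x = 0} ∩ Metric.sphere 0 1
  have hK : IsCompact (KU ×ˢ KT) := by
    refine isCompact_orth.prod ((isCompact_sphere _ _).inter_left ?_)
    exact isClosed_eq (by fun_prop) continuous_const
  let φ : (∀ i, Fin (d i) → (Σ j : Fin m, Fin (A i j) × Fin (n j))) →
      (∀ j : Fin m, Matrix (Fin (n j)) (Fin (n j)) ℝ) × ((Σ j : Fin m, Fin (n j)) → ℝ) → ℝ :=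
    fun S z => min (∏ i, ((∏ s, p (S i s).1) * ((RR X z.1 i).submatrix (S i) id).det ^ 2))
      (∑ i, ∑ s, z.2 ⟨(S i s).1, (S i s).2.2⟩ - ∑ x, p x.1 * z.2 x)
  have hφ : ∀ S, Continuous (φ S) := by
    intro S
    refine Continuous.min ?_ (by fun_prop)
    refine continuous_finsetProd _ fun i _ => continuous_const.mul (Continuous.pow ?_ 2)
    exact (continuous_RR_det X i (S i)).comp continuous_fst
  have hpos : ∀ z ∈ KU ×ˢ KT, ∃ S, 0 < φ S z := by
    rintro ⟨U, θ⟩ ⟨hU, hθ0, hθ1⟩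
    obtain ⟨S, hS1, hS2⟩ := exists_S p X hX U hU θ (by
      by_contra hcon
      push Not at hcon
      have hθ0' : ∑ x, θ x = 0 := hθ0
      have hz : θ = 0 := by
        funext x
        have : ∀ y, θ y = θ x := fun y => le_antisymm (hcon x y) (hcon y x)
        simp only [this, Finset.sum_const, nsmul_eq_mul] at hθ0'
        rcases mul_eq_zero.1 hθ0' with h | h
        · have : Finset.card (Finset.univ : Finset (Σ j : Fin m, Fin (n j))) = 0 := by
            exact_mod_cast h
          rw [Finset.card_eq_zero] at this
          exact absurd (Finset.mem_univ x) (by rw [this]; simp)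
        · exact h
      rw [hz] at hθ1
      simp at hθ1)
    refine ⟨S, lt_min ?_ hS2⟩
    refine Finset.prod_pos fun i _ => mul_pos (Finset.prod_pos fun s _ => hp _) ?_
    have := hS1 i
    positivity
  by_cases hne : (KU ×ˢ KT).Nonempty
  · obtain ⟨z0, hz0⟩ := hne
    obtain ⟨S0, -⟩ := hpos z0 hz0
    have hun : (Finset.univ : Finset (∀ i, Fin (d i) →
      (Σ j : Fin m, Fin (A i j) × Fin (n j)))).Nonempty := ⟨S0, Finset.mem_univ _⟩
    obtain ⟨z1, hz1, hmin⟩ := hK.exists_isMinOn ⟨z0, hz0⟩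
      (f := fun z => Finset.univ.sup' hun (fun S => φ S z))
      (Continuous.finset_sup'_apply hun fun S _ => hφ S).continuousOn
    refine ⟨Finset.univ.sup' hun (fun S => φ S z1), ?_, ?_⟩
    · obtain ⟨S, hS⟩ := hpos z1 hz1
      exact hS.trans_le (Finset.le_sup' (fun S => φ S z1) (Finset.mem_univ S))
    · intro U hU θ h0 h1
      have h2 := hmin (show (U, θ) ∈ KU ×ˢ KT from ⟨hU, h0, by simpa using h1⟩)
      obtain ⟨S, -, hS⟩ := Finset.exists_mem_eq_sup' hun (fun S => φ S (U, θ))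
      simp only [Set.mem_ofPred_eq] at h2
      rw [hS] at h2
      exact ⟨S, le_min_iff.1 h2⟩
  · refine ⟨1, one_pos, fun U hU θ h0 h1 => ?_⟩
    exact absurd ⟨(U, θ), hU, h0, by simpa using h1⟩ hne

theorem capVal_scale {k m : ℕ} {d : Fin k → ℕ} {n : Fin m → ℕ} {A : Fin k → Fin m → ℕ}
    (p : Fin m → ℝ)
    (hbal : ∑ i : Fin k, (d i : ℝ) = ∑ j : Fin m, p j * (n j : ℝ))
    (X : ∀ i : Fin k, ∀ j : Fin m, Fin (A i j) → Matrix (Fin (n j)) (Fin (d i)) ℝ)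
    (Y : ∀ j : Fin m, Matrix (Fin (n j)) (Fin (n j)) ℝ) (hY : ∀ j, (Y j).PosDef) (s : ℝ) :
    capVal p X (fun j => Real.exp s • Y j) = capVal p X Y := by
  have h1 : ∀ i, MM p X (fun j => Real.exp s • Y j) i = Real.exp s • MM p X Y i := by
    intro i
    simp only [MM, Finset.smul_sum, Matrix.mul_smul, Matrix.smul_mul]
    refine Finset.sum_congr rfl fun j _ => Finset.sum_congr rfl fun a _ => smul_comm _ _ _
  rw [capVal_eq, capVal_eq]
  simp only [h1, det_smul, Fintype.card_fin]
  rw [Finset.prod_mul_distrib]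
  have h2 : ∏ i, Real.exp s ^ (d i) = Real.exp (s * ∑ i, (d i : ℝ)) := by
    rw [Finset.mul_sum, Real.exp_sum]
    refine Finset.prod_congr rfl fun i _ => ?_
    rw [← Real.exp_nat_mul, mul_comm]
  have h3 : ∏ j, (Real.exp s ^ (n j) * (Y j).det) ^ (p j) =
      Real.exp (s * ∑ j, p j * (n j : ℝ)) * ∏ j, (Y j).det ^ (p j) := by
    rw [Finset.mul_sum, Real.exp_sum, ← Finset.prod_mul_distrib]
    refine Finset.prod_congr rfl fun j _ => ?_
    rw [Real.mul_rpow (by positivity) (hY j).det_pos.le, ← Real.exp_nat_mul, ← Real.exp_mul]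
    congr 2
    ring
  rw [h2, h3, hbal, mul_div_mul_left _ _ (Real.exp_pos _).ne']

theorem exists_YY {m : ℕ} {n : Fin m → ℕ}
    (Y : ∀ j : Fin m, Matrix (Fin (n j)) (Fin (n j)) ℝ) (hY : ∀ j, (Y j).PosDef) :
    ∃ (U : ∀ j : Fin m, Matrix (Fin (n j)) (Fin (n j)) ℝ) (t : (Σ j : Fin m, Fin (n j)) → ℝ)
      (s : ℝ), (∀ j, (U j)ᵀ * U j = 1) ∧ ∑ x, t x = 0 ∧ Y = fun j => Real.exp s • YY U t j := by
  choose U l hU _ hYl _ hl _ using fun j => spectral_real (Y j) (hY j).isHermitian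
  let N : ℝ := (Fintype.card (Σ j : Fin m, Fin (n j)) : ℝ)
  let s : ℝ := (∑ x : (Σ j : Fin m, Fin (n j)), Real.log (l x.1 x.2)) / N
  refine ⟨U, fun x => Real.log (l x.1 x.2) - s, s, hU, ?_, ?_⟩
  · rw [Finset.sum_sub_distrib, Finset.sum_const, nsmul_eq_mul, Finset.card_univ]
    by_cases hN : N = 0
    · have : IsEmpty (Σ j : Fin m, Fin (n j)) := Fintype.card_eq_zero_iff.1 (Nat.cast_eq_zero.1 hN)
      simp
    · have : N * s = ∑ x : (Σ j : Fin m, Fin (n j)), Real.log (l x.1 x.2) := by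
        simp only [s]; field_simp
      exact sub_eq_zero.2 this.symm
  · funext j
    have h1 : (fun r => Real.exp (Real.log (l j r) - s)) = Real.exp (-s) • l j := by
      funext r
      rw [Real.exp_sub, Real.exp_log (hl j (hY j) r), Pi.smul_apply, smul_eq_mul, Real.exp_neg]
      field_simp
    simp only [YY]
    rw [h1, diagonal_smul, Matrix.mul_smul, Matrix.smul_mul, smul_smul, ← Real.exp_add,
      add_neg_cancel, Real.exp_zero, one_smul]
    exact hYl j

theorem stable_min {k m : ℕ} {d : Fin k → ℕ} {n : Fin m → ℕ} {A : Fin k → Fin m → ℕ}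
    (p : Fin m → ℝ) (hp : ∀ j, 0 < p j)
    (X : ∀ i : Fin k, ∀ j : Fin m, Fin (A i j) → Matrix (Fin (n j)) (Fin (d i)) ℝ)
    (hX : Stable p X) :
    ∃ Y : (∀ j : Fin m, Matrix (Fin (n j)) (Fin (n j)) ℝ), (∀ j, (Y j).PosDef) ∧
      0 < capVal p X Y ∧ ∀ Z : (∀ j : Fin m, Matrix (Fin (n j)) (Fin (n j)) ℝ),
        (∀ j, (Z j).PosDef) → capVal p X Y ≤ capVal p X Z := by
  obtain ⟨c, hc, hunif⟩ := exists_uniform p hp X hX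
  let f : (∀ j : Fin m, Matrix (Fin (n j)) (Fin (n j)) ℝ) × ((Σ j : Fin m, Fin (n j)) → ℝ) → ℝ :=
    fun z => (∏ i, (MM p X (YY z.1 z.2) i).det) / Real.exp (∑ x, p x.1 * z.2 x)
  have hYYc : ∀ j, Continuous fun z : (∀ j : Fin m, Matrix (Fin (n j)) (Fin (n j)) ℝ) ×
      ((Σ j : Fin m, Fin (n j)) → ℝ) => YY z.1 z.2 j := by
    intro j
    have h1 : Continuous fun z : (∀ j : Fin m, Matrix (Fin (n j)) (Fin (n j)) ℝ) ×
      ((Σ j : Fin m, Fin (n j)) → ℝ) => z.1 j := (continuous_apply j).comp continuous_fst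
    refine (h1.matrix_mul (Continuous.matrix_diagonal ?_)).matrix_mul h1.matrix_transpose
    fun_prop
  have hf : Continuous f := by
    refine Continuous.div ?_ (by fun_prop) (fun z => (Real.exp_pos _).ne')
    refine continuous_finsetProd _ fun i _ => Continuous.matrix_det ?_
    unfold MM
    refine continuous_finsetSum _ fun j _ => ?_
    have h2 : Continuous fun z : (∀ j : Fin m, Matrix (Fin (n j)) (Fin (n j)) ℝ) ×
        ((Σ j : Fin m, Fin (n j)) → ℝ) =>
        ∑ a : Fin (A i j), (X i j a)ᵀ * YY z.1 z.2 j * X i j a := by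
      refine continuous_finsetSum _ fun a _ => ?_
      exact (continuous_const.matrix_mul (hYYc j)).matrix_mul continuous_const
    exact h2.const_smul (p j)
  have hfe : ∀ U t, (∀ j, (U j)ᵀ * U j = 1) → capVal p X (YY U t) = f (U, t) := by
    intro U t hU
    rw [capVal_eq, YY_den p U hU]
  have hfpos : ∀ U t, (∀ j, (U j)ᵀ * U j = 1) → 0 < f (U, t) := by
    intro U t hU
    choose S hS using fun i => exists_rows_det_ne_zero (RR X U i) (RR_ker p X hX U hU i)
    rw [← hfe U t hU]
    refine lt_of_lt_of_le (mul_pos ?_ (Real.exp_pos _)) (capVal_YY_ge p hp X U hU t S hS)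
    refine Finset.prod_pos fun i _ => mul_pos (Finset.prod_pos fun s _ => hp _) ?_
    have := hS i
    positivity
  let f0 := f (fun _ => 1, 0)
  have hf0 : 0 < f0 := hfpos _ _ (by simp)
  have hbig : ∃ R : ℝ, 0 ≤ R ∧ ∀ T, R < T → f0 ≤ c * Real.exp (c * T) := by
    refine ⟨f0 / c / c, by positivity, fun T hT => ?_⟩
    have h1 := Real.add_one_le_exp (c * T)
    have h2 : f0 / c < c * T := by rwa [div_lt_iff₀' hc] at hT
    rw [div_lt_iff₀' hc] at h2
    nlinarith
  obtain ⟨R, hR0, hR⟩ := hbig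
  let K : Set ((∀ j : Fin m, Matrix (Fin (n j)) (Fin (n j)) ℝ) ×
      ((Σ j : Fin m, Fin (n j)) → ℝ)) :=
    {U | ∀ j, (U j)ᵀ * U j = 1} ×ˢ ({θ | ∑ x, θ x = 0} ∩ Metric.closedBall 0 R)
  have hK : IsCompact K := by
    refine isCompact_orth.prod ((isCompact_closedBall _ _).inter_left ?_)
    exact isClosed_eq (by fun_prop) continuous_const
  have h0K : ((fun _ => 1, 0) : (∀ j : Fin m, Matrix (Fin (n j)) (Fin (n j)) ℝ) ×
      ((Σ j : Fin m, Fin (n j)) → ℝ)) ∈ K := by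
    refine ⟨fun j => by simp, by simp, by simpa using hR0⟩
  obtain ⟨⟨U1, t1⟩, ⟨hU1, ht1⟩, hmin⟩ := hK.exists_isMinOn ⟨_, h0K⟩ hf.continuousOn
  refine ⟨YY U1 t1, YY_posDef U1 hU1 t1, by rw [hfe U1 t1 hU1]; exact hfpos U1 t1 hU1, ?_⟩
  intro Z hZ
  obtain ⟨U, t, s, hU, ht, rfl⟩ := exists_YY Z hZ
  rw [capVal_scale p hX.2.1 X _ (YY_posDef U hU t), hfe U1 t1 hU1]
  by_cases htR : ‖t‖ ≤ R
  · rw [hfe U t hU]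
    exact hmin (show (U, t) ∈ K from ⟨hU, ht, by simpa using htR⟩)
  · push Not at htR
    have hT : 0 < ‖t‖ := hR0.trans_lt htR
    refine (show f (U1, t1) ≤ f0 from hmin h0K).trans ((hR _ htR).trans ?_)
    obtain ⟨S, hS1, hS2⟩ := hunif U hU (‖t‖⁻¹ • t)
      (by simp only [Pi.smul_apply, smul_eq_mul, ← Finset.mul_sum, ht, mul_zero])
      (by rw [norm_smul, norm_inv, norm_norm, inv_mul_cancel₀ hT.ne'])
    refine le_trans ?_ (capVal_YY_ge p hp X U hU t S ?_)
    · refine mul_le_mul hS1 (Real.exp_le_exp.2 ?_) (Real.exp_pos _).le (hc.le.trans hS1)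
      have h3 := mul_le_mul_of_nonneg_right hS2 hT.le
      refine h3.trans (le_of_eq ?_)
      simp only [Pi.smul_apply, smul_eq_mul]
      rw [sub_mul, Finset.sum_mul, Finset.sum_mul]
      congr 1
      · refine Finset.sum_congr rfl fun i _ => ?_
        rw [Finset.sum_mul]
        refine Finset.sum_congr rfl fun s _ => ?_
        field_simp
      · refine Finset.sum_congr rfl fun x _ => ?_
        field_simp
    · intro i h0
      have : ∏ i, ((∏ s, p (S i s).1) * ((RR X U i).submatrix (S i) id).det ^ 2) = 0 :=
        Finset.prod_eq_zero (Finset.mem_univ i) (by rw [h0]; simp)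
      linarith

theorem stable_geometrizable {k m : ℕ} {d : Fin k → ℕ} {n : Fin m → ℕ} {A : Fin k → Fin m → ℕ}
    (p : Fin m → ℝ) (hp : ∀ j, 0 < p j)
    (X : ∀ i : Fin k, ∀ j : Fin m, Fin (A i j) → Matrix (Fin (n j)) (Fin (d i)) ℝ)
    (hX : Stable p X) :
    ∃ (G : ∀ i : Fin k, Matrix (Fin (d i)) (Fin (d i)) ℝ)
      (h : ∀ j : Fin m, Matrix (Fin (n j)) (Fin (n j)) ℝ),
      (∀ i, IsUnit (G i).det) ∧ (∀ j, IsUnit (h j).det) ∧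
      IsGeometric p (fun i j a => h j * X i j a * G i) := by
  obtain ⟨Y, hY, hpos, hmin⟩ := stable_min p hp X hX
  exact geometrizable_of_min p hp hX.2.1 X Y hY hpos hmin


/-- The concatenation equivalence underlying `fembed`. -/
def fequiv {s : ℕ} (f : Fin s → ℕ) (N : ℕ) (hN : ∑ ℓ, f ℓ = N) : (Σ ℓ, Fin (f ℓ)) ≃ Fin N :=
  finSigmaFinEquiv.trans (finCongr hN)

theorem fequiv_apply {s : ℕ} (f : Fin s → ℕ) (N : ℕ) (hN : ∑ ℓ, f ℓ = N) (ℓ : Fin s)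
    (r : Fin (f ℓ)) : fequiv f N hN ⟨ℓ, r⟩ = Fin.cast hN (fembed f ℓ r) := by
  apply Fin.ext
  simp only [fequiv, Equiv.trans_apply, finCongr_apply, Fin.val_cast, finSigmaFinEquiv_apply,
    fembed]
  congr 1
  symm
  refine Finset.sum_bij' (fun x hx => ⟨x.1, Fin.lt_def.1 (Finset.mem_filter.1 hx).2⟩)
    (fun x _ => Fin.castLE ℓ.2.le x) ?_ ?_ ?_ ?_ ?_
  · intro x hx; exact Finset.mem_univ _
  · intro x hx
    exact Finset.mem_filter.2 ⟨Finset.mem_univ _, Fin.lt_def.2 x.2⟩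
  · intro x hx; rfl
  · intro x hx; rfl
  · intro x hx; rfl

theorem geometric_blockDiagonal {k m s : ℕ} {d : Fin k → ℕ} {n : Fin m → ℕ}
    {A : Fin k → Fin m → ℕ} (p : Fin m → ℝ)
    (dd : Fin s → Fin k → ℕ) (nn : Fin s → Fin m → ℕ)
    (e1 : ∀ i, (Σ ℓ, Fin (dd ℓ i)) ≃ Fin (d i)) (e2 : ∀ j, (Σ ℓ, Fin (nn ℓ j)) ≃ Fin (n j))
    (B : ∀ ℓ : Fin s, ∀ i : Fin k, ∀ j : Fin m,
          Fin (A i j) → Matrix (Fin (nn ℓ j)) (Fin (dd ℓ i)) ℝ)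
    (hB : ∀ ℓ, IsGeometric p (B ℓ)) :
    IsGeometric p (fun i j a => (blockDiagonal' (fun ℓ => B ℓ i j a)).submatrix
      (e2 j).symm (e1 i).symm) := by
  constructor
  · intro i
    ext x y
    obtain ⟨⟨ℓ, x⟩, rfl⟩ := (e1 i).surjective x
    obtain ⟨⟨ℓ', y⟩, rfl⟩ := (e1 i).surjective y
    simp only [transpose_submatrix, submatrix_mul_equiv, blockDiagonal'_transpose,
      ← blockDiagonal'_mul, Matrix.sum_apply, Matrix.smul_apply, submatrix_apply,
      Equiv.symm_apply_apply, Matrix.one_apply, EmbeddingLike.apply_eq_iff_eq]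
    by_cases h : ℓ = ℓ'
    · subst h
      have := congrFun (congrFun ((hB ℓ).1 i) x) y
      simp only [Matrix.sum_apply, Matrix.smul_apply, Matrix.one_apply] at this
      simp only [blockDiagonal'_apply_eq, this, Sigma.mk.injEq, heq_eq_eq, true_and]
    · simp only [blockDiagonal'_apply_ne _ _ _ h, Finset.sum_const_zero, smul_zero]
      rw [if_neg]
      intro h'
      exact h (congrArg Sigma.fst h')
  · intro i
    ext x y
    obtain ⟨⟨ℓ, x⟩, rfl⟩ := (e2 i).surjective x
    obtain ⟨⟨ℓ', y⟩, rfl⟩ := (e2 i).surjective y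
    simp only [transpose_submatrix, submatrix_mul_equiv, blockDiagonal'_transpose,
      ← blockDiagonal'_mul, Matrix.sum_apply, submatrix_apply,
      Equiv.symm_apply_apply, Matrix.one_apply, EmbeddingLike.apply_eq_iff_eq]
    by_cases h : ℓ = ℓ'
    · subst h
      have := congrFun (congrFun ((hB ℓ).2 i) x) y
      simp only [Matrix.sum_apply, Matrix.one_apply] at this
      simp only [blockDiagonal'_apply_eq, this, Sigma.mk.injEq, heq_eq_eq, true_and]
    · simp only [blockDiagonal'_apply_ne _ _ _ h, Finset.sum_const_zero]
      rw [if_neg]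
      intro h'
      exact h (congrArg Sigma.fst h')

theorem isUnit_det_blockDiagonal {s N : ℕ} (f : Fin s → ℕ) (e : (Σ ℓ, Fin (f ℓ)) ≃ Fin N)
    (M : ∀ ℓ, Matrix (Fin (f ℓ)) (Fin (f ℓ)) ℝ) (hM : ∀ ℓ, IsUnit (M ℓ).det) :
    IsUnit ((blockDiagonal' M).submatrix e.symm e.symm).det := by
  have h1 : blockDiagonal' M * blockDiagonal' (fun ℓ => (M ℓ)⁻¹) = 1 := by
    rw [← blockDiagonal'_mul]
    simp only [mul_nonsing_inv _ (hM _)]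
    exact blockDiagonal'_one
  rw [det_submatrix_equiv_self]
  have h2 := congrArg Matrix.det h1
  rw [det_mul, det_one] at h2
  exact IsUnit.of_mul_eq_one _ h2

theorem extremizable_of_direct_sum {k m : ℕ}
    {d : Fin k → ℕ} {n : Fin m → ℕ} {A : Fin k → Fin m → ℕ} (p : Fin m → ℝ)
    (hp : ∀ j, 0 < p j)
    (V : ∀ i : Fin k, ∀ j : Fin m, Fin (A i j) → Matrix (Fin (n j)) (Fin (d i)) ℝ)
    (s : ℕ) (dd : Fin s → Fin k → ℕ) (nn : Fin s → Fin m → ℕ)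
    (hd' : ∀ i, ∑ ℓ : Fin s, dd ℓ i = d i) (hn' : ∀ j, ∑ ℓ : Fin s, nn ℓ j = n j)
    (g : ∀ i : Fin k, Matrix (Fin (d i)) (Fin (d i)) ℝ)
    (h : ∀ j : Fin m, Matrix (Fin (n j)) (Fin (n j)) ℝ)
    (X : ∀ ℓ : Fin s, ∀ i : Fin k, ∀ j : Fin m,
      Fin (A i j) → Matrix (Fin (nn ℓ j)) (Fin (dd ℓ i)) ℝ)
    (hg : ∀ i, IsUnit (g i).det) (hh : ∀ j, IsUnit (h j).det)
    (hX : ∀ ℓ, Stable p (X ℓ))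
    (hblock : ∀ i j a (ℓ ℓ' : Fin s) (r : Fin (nn ℓ j)) (c : Fin (dd ℓ' i)),
      (h j * V i j a * (g i)⁻¹)
          (Fin.cast (hn' j) (fembed (fun ℓ'' => nn ℓ'' j) ℓ r))
          (Fin.cast (hd' i) (fembed (fun ℓ'' => dd ℓ'' i) ℓ' c)) =
        if hll : ℓ = ℓ' then X ℓ i j a r (Fin.cast (by rw [hll]) c) else 0) :
    Extremizable p V := by
  choose G H hG hH hgeo using fun ℓ => stable_geometrizable p hp (X ℓ) (hX ℓ)
  let e1 : ∀ i, (Σ ℓ, Fin (dd ℓ i)) ≃ Fin (d i) := fun i => fequiv (fun ℓ => dd ℓ i) (d i) (hd' i)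
  let e2 : ∀ j, (Σ ℓ, Fin (nn ℓ j)) ≃ Fin (n j) := fun j => fequiv (fun ℓ => nn ℓ j) (n j) (hn' j)
  have hW : ∀ i j a, h j * V i j a * (g i)⁻¹ =
      (blockDiagonal' (fun ℓ => X ℓ i j a)).submatrix (e2 j).symm (e1 i).symm := by
    intro i j a
    ext x y
    obtain ⟨⟨ℓ, x⟩, rfl⟩ := (e2 j).surjective x
    obtain ⟨⟨ℓ', y⟩, rfl⟩ := (e1 i).surjective y
    rw [submatrix_apply, Equiv.symm_apply_apply, Equiv.symm_apply_apply]
    have := hblock i j a ℓ ℓ' x y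
    simp only [e1, e2, fequiv_apply]
    rw [this]
    by_cases hl : ℓ = ℓ'
    · subst hl
      rw [dif_pos rfl, blockDiagonal'_apply_eq]
      rfl
    · rw [dif_neg hl, blockDiagonal'_apply_ne _ _ _ hl]
  have key := geometric_blockDiagonal p dd nn e1 e2 _ hgeo
  refine extremizable_of_geometric p hp V
    (fun i => (g i)⁻¹ * (blockDiagonal' (fun ℓ => G ℓ i)).submatrix (e1 i).symm (e1 i).symm)
    (fun j => (blockDiagonal' (fun ℓ => H ℓ j)).submatrix (e2 j).symm (e2 j).symm * h j) ?_ ?_ ?_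
  · intro i
    rw [det_mul]
    exact (isUnit_nonsing_inv_det _ (hg i)).mul
      (isUnit_det_blockDiagonal _ (e1 i) _ fun ℓ => hG ℓ i)
  · intro j
    rw [det_mul]
    exact (isUnit_det_blockDiagonal _ (e2 j) _ fun ℓ => hH ℓ j).mul (hh j)
  · convert key using 4 with i j a
    calc _ = (blockDiagonal' (fun ℓ => H ℓ j)).submatrix (e2 j).symm (e2 j).symm *
          (h j * V i j a * (g i)⁻¹) *
          (blockDiagonal' (fun ℓ => G ℓ i)).submatrix (e1 i).symm (e1 i).symm := by
            simp only [Matrix.mul_assoc]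
      _ = _ := by
        rw [hW, submatrix_mul_equiv, submatrix_mul_equiv, ← blockDiagonal'_mul,
          ← blockDiagonal'_mul]


/-- Orthogonal decomposition into minimal good elements, in lattice form. -/
theorem lattice_decomp {L : Type*} [CompleteLattice L] (rank : L → ℕ) (hr : StrictMono rank)
    (perp : L → L) (hsup : ∀ a b, a ≤ b → a ⊔ (perp a ⊓ b) = b) (hdisj : ∀ a, a ≤ perp a → a = ⊥)
    (hsymm : ∀ a b, a ≤ perp b → b ≤ perp a) (Good : L → Prop)
    (hinf : ∀ a b, Good a → Good b → Good (a ⊓ b)) (hperp : ∀ a, Good a → Good (perp a)) :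
    ∀ (N : ℕ) (U : L), rank U ≤ N → Good U → ∃ (s : ℕ) (T : Fin s → L),
      (∀ ℓ, Good (T ℓ) ∧ T ℓ ≠ ⊥ ∧ ∀ a, Good a → a ≤ T ℓ → a = ⊥ ∨ a = T ℓ) ∧
      (∀ ℓ ℓ', ℓ ≠ ℓ' → T ℓ ≤ perp (T ℓ')) ∧ ⨆ ℓ, T ℓ = U := by
  intro N
  induction N with
  | zero =>
    intro U hU _
    refine ⟨0, Fin.elim0, fun ℓ => ℓ.elim0, fun ℓ => ℓ.elim0, ?_⟩
    by_contra hne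
    have h1 : (⊥ : L) < U := bot_lt_iff_ne_bot.2 (fun h => hne (by rw [h]; simp))
    have := hr h1
    omega
  | succ N ih =>
    intro U hU hG
    by_cases hbot : U = ⊥
    · refine ⟨0, Fin.elim0, fun ℓ => ℓ.elim0, fun ℓ => ℓ.elim0, ?_⟩
      rw [hbot]; simp
    obtain ⟨T0, ⟨hT0, hT0b, hT0U⟩, hmin⟩ := WellFounded.has_min (measure rank).wf
      {a | Good a ∧ a ≠ ⊥ ∧ a ≤ U} ⟨U, hG, hbot, le_rfl⟩
    have hmin' : ∀ a, Good a → a ≤ T0 → a = ⊥ ∨ a = T0 := by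
      intro a ha haT
      by_contra hcon
      push Not at hcon
      exact hmin a ⟨ha, hcon.1, haT.trans hT0U⟩ (hr (lt_of_le_of_ne haT hcon.2))
    have hlt : perp T0 ⊓ U < U := by
      refine lt_of_le_of_ne inf_le_right fun h => hT0b (hdisj T0 ?_)
      rw [← h] at hT0U
      exact hT0U.trans inf_le_left
    obtain ⟨s, T, h1, h2, h3⟩ := ih (perp T0 ⊓ U) (by have := hr hlt; omega)
      (hinf _ _ (hperp _ hT0) hG)
    have h4 : ∀ ℓ, T ℓ ≤ perp T0 := fun ℓ => (le_iSup T ℓ).trans (h3.le.trans inf_le_left)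
    refine ⟨s + 1, Fin.cons T0 T, ?_, ?_, ?_⟩
    · intro ℓ
      refine Fin.cases ?_ (fun ℓ => ?_) ℓ
      · exact ⟨hT0, hT0b, hmin'⟩
      · simpa using h1 ℓ
    · intro ℓ ℓ'
      refine Fin.cases ?_ (fun ℓ => ?_) ℓ <;> refine Fin.cases ?_ (fun ℓ' => ?_) ℓ'
      · intro h; exact absurd rfl h
      · intro _; simpa using hsymm _ _ (h4 ℓ')
      · intro _; simpa using h4 ℓ
      · intro h; simpa using h2 ℓ ℓ' (fun e => h (by rw [e]))
    · rw [← hsup T0 U hT0U, ← h3]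
      apply le_antisymm
      · refine iSup_le fun ℓ => Fin.cases ?_ (fun ℓ => ?_) ℓ
        · exact le_sup_left
        · exact (le_iSup T ℓ).trans le_sup_right
      · refine sup_le (le_iSup (Fin.cons T0 T : Fin (s+1) → L) 0) (iSup_le fun ℓ => ?_)
        exact le_iSup (Fin.cons T0 T : Fin (s+1) → L) ℓ.succ

theorem bessel_sub {E : Type*} [NormedAddCommGroup E] [InnerProductSpace ℝ E]
    {N : Type*} [Fintype N] (U : Submodule ℝ E) (b : OrthonormalBasis N ℝ U) (x : E) :
    ∑ s, (inner ℝ (b s : E) x) ^ 2 ≤ ‖x‖ ^ 2 ∧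
      (∑ s, (inner ℝ (b s : E) x) ^ 2 = ‖x‖ ^ 2 ↔ x ∈ U) := by
  have hb : Orthonormal ℝ (fun s => (b s : E)) := b.orthonormal.comp_linearIsometry U.subtypeₗᵢ
  have hP : ‖x - ∑ s, (inner ℝ (b s : E) x) • (b s : E)‖ ^ 2 =
      ‖x‖ ^ 2 - ∑ s, (inner ℝ (b s : E) x) ^ 2 := by
    rw [@norm_sub_sq ℝ]
    have h1 : ‖∑ s, (inner ℝ (b s : E) x) • (b s : E)‖ ^ 2 = ∑ s, (inner ℝ (b s : E) x) ^ 2 := by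
      rw [← real_inner_self_eq_norm_sq, hb.inner_sum]
      exact Finset.sum_congr rfl fun s _ => by simp [sq]
    have h2 : inner ℝ x (∑ s, (inner ℝ (b s : E) x) • (b s : E)) =
        ∑ s, (inner ℝ (b s : E) x) ^ 2 := by
      rw [inner_sum]
      refine Finset.sum_congr rfl fun s _ => ?_
      rw [real_inner_smul_right, real_inner_comm, sq]
    rw [h1, h2]
    simp
    ring
  refine ⟨by nlinarith [sq_nonneg ‖x - ∑ s, (inner ℝ (b s : E) x) • (b s : E)‖], ?_, ?_⟩
  · intro h
    rw [h, sub_self] at hP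
    have h3 := sub_eq_zero.1 (norm_eq_zero.1 (pow_eq_zero_iff (two_ne_zero)|>.1 hP))
    rw [h3]
    exact Submodule.sum_mem _ fun s _ => U.smul_mem _ (b s).2
  · intro hx
    have h4 := b.sum_sq_norm_inner_right (⟨x, hx⟩ : U)
    simpa using h4

section Abstract

variable {k m : ℕ} {A : Fin k → Fin m → ℕ} {E : Fin k → Type} {F : Fin m → Type}
  [∀ i, NormedAddCommGroup (E i)] [∀ i, InnerProductSpace ℝ (E i)]
  [∀ i, FiniteDimensional ℝ (E i)]
  [∀ j, NormedAddCommGroup (F j)] [∀ j, InnerProductSpace ℝ (F j)]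
  [∀ j, FiniteDimensional ℝ (F j)]

theorem geometric_ineq (p : Fin m → ℝ) (hp : ∀ j, 0 < p j)
    (w : ∀ i j, Fin (A i j) → (E i →ₗ[ℝ] F j)) (wt : ∀ i j, Fin (A i j) → (F j →ₗ[ℝ] E i))
    (hadj : ∀ i j a x y, inner ℝ (w i j a x) y = inner ℝ x (wt i j a y))
    (h1 : ∀ i x, ∑ j, p j * ∑ a, ‖w i j a x‖ ^ 2 = ‖x‖ ^ 2)
    (h2 : ∀ j y, ∑ i, ∑ a, ‖wt i j a y‖ ^ 2 = ‖y‖ ^ 2)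
    (U1 : ∀ i, Submodule ℝ (E i)) (U2 : ∀ j, Submodule ℝ (F j))
    (hU : ∀ i j a, ∀ x ∈ U1 i, w i j a x ∈ U2 j) :
    ∑ i, (Module.finrank ℝ (U1 i) : ℝ) ≤ ∑ j, p j * (Module.finrank ℝ (U2 j) : ℝ) ∧
    (∑ i, (Module.finrank ℝ (U1 i) : ℝ) = ∑ j, p j * (Module.finrank ℝ (U2 j) : ℝ) →
      ∀ i j a, ∀ y ∈ U2 j, wt i j a y ∈ U1 i) := by
  let e := fun i => stdOrthonormalBasis ℝ (U1 i)
  let f := fun j => stdOrthonormalBasis ℝ (U2 j)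
  have e1 : ∑ i, (Module.finrank ℝ (U1 i) : ℝ) =
      ∑ j, p j * ∑ i, ∑ a, ∑ r, ∑ s, (inner ℝ (e i s : E i) (wt i j a (f j r))) ^ 2 := by
    have : ∀ i, (Module.finrank ℝ (U1 i) : ℝ) =
        ∑ j, p j * ∑ a, ∑ r, ∑ s, (inner ℝ (e i s : E i) (wt i j a (f j r))) ^ 2 := by
      intro i
      have h3 : (Module.finrank ℝ (U1 i) : ℝ) = ∑ s, ‖(e i s : E i)‖ ^ 2 := by
        have : ∀ s, ‖(e i s : E i)‖ = 1 := fun s => (e i).orthonormal.1 s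
        simp [this]
      rw [h3]
      simp only [← h1]
      rw [Finset.sum_comm]
      refine Finset.sum_congr rfl fun j _ => ?_
      rw [← Finset.mul_sum, Finset.sum_comm]
      congr 1
      refine Finset.sum_congr rfl fun a _ => ?_
      rw [Finset.sum_comm]
      refine Finset.sum_congr rfl fun s _ => ?_
      rw [← (bessel_sub (U2 j) (f j) _).2.2 (hU i j a _ (e i s).2)]
      refine Finset.sum_congr rfl fun r _ => ?_
      rw [real_inner_comm, hadj]
    simp only [this]
    rw [Finset.sum_comm]
    exact Finset.sum_congr rfl fun j _ => by rw [Finset.mul_sum]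
  have e2 : ∑ j, p j * (Module.finrank ℝ (U2 j) : ℝ) =
      ∑ j, p j * ∑ i, ∑ a, ∑ r, ‖wt i j a (f j r)‖ ^ 2 := by
    refine Finset.sum_congr rfl fun j _ => ?_
    congr 1
    have h3 : (Module.finrank ℝ (U2 j) : ℝ) = ∑ s, ‖(f j s : F j)‖ ^ 2 := by
      have : ∀ s, ‖(f j s : F j)‖ = 1 := fun s => (f j).orthonormal.1 s
      simp [this]
    rw [h3]
    simp only [← h2]
    rw [Finset.sum_comm]
    refine Finset.sum_congr rfl fun i _ => ?_
    rw [Finset.sum_comm]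
  have hb : ∀ i j a r, ∑ s, (inner ℝ (e i s : E i) (wt i j a (f j r))) ^ 2 ≤
      ‖wt i j a (f j r)‖ ^ 2 := fun i j a r => (bessel_sub (U1 i) (e i) _).1
  have hb3 : ∀ i j a, ∑ r, ∑ s, (inner ℝ (e i s : E i) (wt i j a (f j r))) ^ 2 ≤
      ∑ r, ‖wt i j a (f j r)‖ ^ 2 := fun i j a => Finset.sum_le_sum fun r _ => hb i j a r
  have hb2 : ∀ i j, ∑ a, ∑ r, ∑ s, (inner ℝ (e i s : E i) (wt i j a (f j r))) ^ 2 ≤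
      ∑ a, ∑ r, ‖wt i j a (f j r)‖ ^ 2 := fun i j => Finset.sum_le_sum fun a _ => hb3 i j a
  have hb1 : ∀ j, p j * ∑ i, ∑ a, ∑ r, ∑ s, (inner ℝ (e i s : E i) (wt i j a (f j r))) ^ 2 ≤
      p j * ∑ i, ∑ a, ∑ r, ‖wt i j a (f j r)‖ ^ 2 := fun j =>
    mul_le_mul_of_nonneg_left (Finset.sum_le_sum fun i _ => hb2 i j) (hp j).le
  rw [e1, e2]
  refine ⟨Finset.sum_le_sum fun j _ => hb1 j, ?_⟩
  intro heq i j a y hy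
  have q1 := (Finset.sum_eq_sum_iff_of_le fun j _ => hb1 j).1 heq j (Finset.mem_univ j)
  have q2 := mul_left_cancel₀ (hp j).ne' q1
  have q3 := (Finset.sum_eq_sum_iff_of_le fun i _ => hb2 i j).1 q2 i (Finset.mem_univ i)
  have q4 := (Finset.sum_eq_sum_iff_of_le fun a _ => hb3 i j a).1 q3 a (Finset.mem_univ a)
  have q5 : ∀ r, wt i j a (f j r) ∈ U1 i := fun r =>
    (bessel_sub (U1 i) (e i) _).2.1
      ((Finset.sum_eq_sum_iff_of_le fun r _ => hb i j a r).1 q4 r (Finset.mem_univ r))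
  have q6 := (f j).sum_repr (⟨y, hy⟩ : U2 j)
  have q7 : y = ∑ r, (f j).repr ⟨y, hy⟩ r • (f j r : F j) := by
    have := congrArg (fun z : U2 j => (z : F j)) q6
    simpa using this.symm
  rw [q7, map_sum]
  refine Submodule.sum_mem _ fun r _ => ?_
  rw [map_smul]
  exact (U1 i).smul_mem _ (q5 r)

end Abstract


section Abstract2

variable {k m : ℕ} {A : Fin k → Fin m → ℕ} {E : Fin k → Type} {F : Fin m → Type}
  [∀ i, NormedAddCommGroup (E i)] [∀ i, InnerProductSpace ℝ (E i)]
  [∀ i, FiniteDimensional ℝ (E i)]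
  [∀ j, NormedAddCommGroup (F j)] [∀ j, InnerProductSpace ℝ (F j)]
  [∀ j, FiniteDimensional ℝ (F j)]

/-- A subspace tuple is good if it is invariant under the maps and their adjoints. -/
def GoodPair (w : ∀ i j, Fin (A i j) → (E i →ₗ[ℝ] F j)) (wt : ∀ i j, Fin (A i j) → (F j →ₗ[ℝ] E i))
    (U : (∀ i, Submodule ℝ (E i)) × (∀ j, Submodule ℝ (F j))) : Prop :=
  (∀ i j a, ∀ x ∈ U.1 i, w i j a x ∈ U.2 j) ∧ (∀ i j a, ∀ y ∈ U.2 j, wt i j a y ∈ U.1 i)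

theorem GoodPair.perp {w : ∀ i j, Fin (A i j) → (E i →ₗ[ℝ] F j)}
    {wt : ∀ i j, Fin (A i j) → (F j →ₗ[ℝ] E i)}
    (hadj : ∀ i j a x y, inner ℝ (w i j a x) y = inner ℝ x (wt i j a y))
    {U : (∀ i, Submodule ℝ (E i)) × (∀ j, Submodule ℝ (F j))} (hU : GoodPair w wt U) :
    GoodPair w wt (fun i => (U.1 i)ᗮ, fun j => (U.2 j)ᗮ) := by
  constructor
  · intro i j a x hx
    rw [Submodule.mem_orthogonal'] at hx ⊢
    intro y hy
    rw [hadj]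
    exact hx _ (hU.2 i j a y hy)
  · intro i j a y hy
    rw [Submodule.mem_orthogonal] at hy ⊢
    intro x hx
    rw [← hadj]
    exact hy _ (hU.1 i j a x hx)

theorem strictMono_rank : StrictMono
    (fun U : (∀ i, Submodule ℝ (E i)) × (∀ j, Submodule ℝ (F j)) =>
      ∑ i, Module.finrank ℝ (U.1 i) + ∑ j, Module.finrank ℝ (U.2 j)) := by
  intro a b hab
  have h1 : ∀ i, a.1 i ≤ b.1 i := fun i => hab.le.1 i
  have h2 : ∀ j, a.2 j ≤ b.2 j := fun j => hab.le.2 j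
  have h3 : ∑ i, Module.finrank ℝ (a.1 i) ≤ ∑ i, Module.finrank ℝ (b.1 i) :=
    Finset.sum_le_sum fun i _ => Submodule.finrank_mono (h1 i)
  have h4 : ∑ j, Module.finrank ℝ (a.2 j) ≤ ∑ j, Module.finrank ℝ (b.2 j) :=
    Finset.sum_le_sum fun i _ => Submodule.finrank_mono (h2 i)
  by_contra hcon
  dsimp only at hcon
  have h5 : ∑ i, Module.finrank ℝ (a.1 i) = ∑ i, Module.finrank ℝ (b.1 i) := by omega
  have h6 : ∑ j, Module.finrank ℝ (a.2 j) = ∑ j, Module.finrank ℝ (b.2 j) := by omega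
  refine hab.ne (Prod.ext ?_ ?_)
  · funext i
    exact Submodule.eq_of_le_of_finrank_eq (h1 i) ((Finset.sum_eq_sum_iff_of_le fun i _ =>
      Submodule.finrank_mono (h1 i)).1 h5 i (Finset.mem_univ i))
  · funext i
    exact Submodule.eq_of_le_of_finrank_eq (h2 i) ((Finset.sum_eq_sum_iff_of_le fun i _ =>
      Submodule.finrank_mono (h2 i)).1 h6 i (Finset.mem_univ i))

theorem pair_decomp (w : ∀ i j, Fin (A i j) → (E i →ₗ[ℝ] F j))
    (wt : ∀ i j, Fin (A i j) → (F j →ₗ[ℝ] E i))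
    (hadj : ∀ i j a x y, inner ℝ (w i j a x) y = inner ℝ x (wt i j a y)) :
    ∃ (s : ℕ) (T : Fin s → (∀ i, Submodule ℝ (E i)) × (∀ j, Submodule ℝ (F j))),
      (∀ ℓ, GoodPair w wt (T ℓ) ∧ T ℓ ≠ ⊥ ∧
        ∀ a, GoodPair w wt a → a ≤ T ℓ → a = ⊥ ∨ a = T ℓ) ∧
      (∀ ℓ ℓ', ℓ ≠ ℓ' → (∀ i, (T ℓ).1 i ⟂ (T ℓ').1 i) ∧ (∀ j, (T ℓ).2 j ⟂ (T ℓ').2 j)) ∧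
      (∀ i, ⨆ ℓ, (T ℓ).1 i = ⊤) ∧ (∀ j, ⨆ ℓ, (T ℓ).2 j = ⊤) := by
  obtain ⟨s, T, h1, h2, h3⟩ := lattice_decomp
    (L := (∀ i, Submodule ℝ (E i)) × (∀ j, Submodule ℝ (F j))) _ strictMono_rank
    (fun U => (fun i => (U.1 i)ᗮ, fun j => (U.2 j)ᗮ))
    (by
      intro a b hab
      refine Prod.ext (funext fun i => ?_) (funext fun j => ?_)
      · exact Submodule.sup_orthogonal_inf_of_hasOrthogonalProjection (hab.1 i)
      · exact Submodule.sup_orthogonal_inf_of_hasOrthogonalProjection (hab.2 j))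
    (by
      intro a ha
      refine Prod.ext (funext fun i => ?_) (funext fun j => ?_)
      · exact Submodule.isOrtho_self.1 (ha.1 i)
      · exact Submodule.isOrtho_self.1 (ha.2 j))
    (by
      intro a b hab
      exact ⟨fun i => Submodule.IsOrtho.symm (hab.1 i), fun j => Submodule.IsOrtho.symm (hab.2 j)⟩)
    (GoodPair w wt)
    (by
      intro a b ha hb
      exact ⟨fun i j c x hx => ⟨ha.1 i j c x hx.1, hb.1 i j c x hx.2⟩,
        fun i j c x hx => ⟨ha.2 i j c x hx.1, hb.2 i j c x hx.2⟩⟩)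
    (fun a ha => ha.perp hadj) _ ⊤ le_rfl
    ⟨fun _ _ _ _ _ => Submodule.mem_top, fun _ _ _ _ _ => Submodule.mem_top⟩
  refine ⟨s, T, h1, fun ℓ ℓ' hne => ⟨(h2 ℓ ℓ' hne).1, (h2 ℓ ℓ' hne).2⟩, fun i => ?_, fun j => ?_⟩
  · have := congrFun (congrArg Prod.fst h3) i
    rw [Prod.fst_iSup, iSup_apply] at this
    exact this
  · have := congrFun (congrArg Prod.snd h3) j
    rw [Prod.snd_iSup, iSup_apply] at this
    exact this

theorem stable_of_minimal (p : Fin m → ℝ) (hp : ∀ j, 0 < p j)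
    (w : ∀ i j, Fin (A i j) → (E i →ₗ[ℝ] F j)) (wt : ∀ i j, Fin (A i j) → (F j →ₗ[ℝ] E i))
    (hadj : ∀ i j a x y, inner ℝ (w i j a x) y = inner ℝ x (wt i j a y))
    (h1 : ∀ i x, ∑ j, p j * ∑ a, ‖w i j a x‖ ^ 2 = ‖x‖ ^ 2)
    (h2 : ∀ j y, ∑ i, ∑ a, ‖wt i j a y‖ ^ 2 = ‖y‖ ^ 2)
    (hbal : ∑ i, (Module.finrank ℝ (E i) : ℝ) = ∑ j, p j * (Module.finrank ℝ (F j) : ℝ))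
    (T : (∀ i, Submodule ℝ (E i)) × (∀ j, Submodule ℝ (F j)))
    (hT : GoodPair w wt T) (hT0 : T ≠ ⊥)
    (hmin : ∀ a, GoodPair w wt a → a ≤ T → a = ⊥ ∨ a = T)
    (dd : Fin k → ℕ) (nn : Fin m → ℕ) (b1 : ∀ i, OrthonormalBasis (Fin (dd i)) ℝ (T.1 i))
    (b2 : ∀ j, OrthonormalBasis (Fin (nn j)) ℝ (T.2 j)) :
    Stable p (fun i j (a : Fin (A i j)) => (Matrix.of fun r c =>
      inner ℝ (b2 j r : F j) (w i j a (b1 i c)) : Matrix (Fin (nn j)) (Fin (dd i)) ℝ)) := by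
  have hdd : ∀ i, Module.finrank ℝ (T.1 i) = dd i := fun i => by
    rw [Module.finrank_eq_card_basis (b1 i).toBasis, Fintype.card_fin]
  have hnn : ∀ j, Module.finrank ℝ (T.2 j) = nn j := fun j => by
    rw [Module.finrank_eq_card_basis (b2 j).toBasis, Fintype.card_fin]
  let ι1 : ∀ i, (Fin (dd i) → ℝ) →ₗ[ℝ] E i := fun i =>
    (T.1 i).subtype ∘ₗ ((b1 i).toBasis.equivFun.symm : (Fin (dd i) → ℝ) →ₗ[ℝ] T.1 i)
  let ι2 : ∀ j, (Fin (nn j) → ℝ) →ₗ[ℝ] F j := fun j =>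
    (T.2 j).subtype ∘ₗ ((b2 j).toBasis.equivFun.symm : (Fin (nn j) → ℝ) →ₗ[ℝ] T.2 j)
  have hι1 : ∀ i, Function.Injective (ι1 i) := fun i =>
    Subtype.val_injective.comp (b1 i).toBasis.equivFun.symm.injective
  have hι2 : ∀ j, Function.Injective (ι2 j) := fun j =>
    Subtype.val_injective.comp (b2 j).toBasis.equivFun.symm.injective
  have hι1a : ∀ i v, ι1 i v = ∑ c, v c • (b1 i c : E i) := by
    intro i v
    have h0 : ι1 i v = (((b1 i).toBasis.equivFun.symm v : T.1 i) : E i) := rfl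
    rw [h0, Module.Basis.equivFun_symm_apply, Submodule.coe_sum]
    simp
  have hι2a : ∀ j v, ι2 j v = ∑ c, v c • (b2 j c : F j) := by
    intro i v
    have h0 : ι2 i v = (((b2 i).toBasis.equivFun.symm v : T.2 i) : F i) := rfl
    rw [h0, Module.Basis.equivFun_symm_apply, Submodule.coe_sum]
    simp
  have hr1 : ∀ i, LinearMap.range (ι1 i) = T.1 i := by
    intro i
    simp only [ι1]
    rw [LinearMap.range_comp_of_range_eq_top _ (LinearEquiv.range _), Submodule.range_subtype]
  have hr2 : ∀ j, LinearMap.range (ι2 j) = T.2 j := by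
    intro j
    simp only [ι2]
    rw [LinearMap.range_comp_of_range_eq_top _ (LinearEquiv.range _), Submodule.range_subtype]
  have hexp : ∀ j (y : F j), y ∈ T.2 j → y = ∑ r, inner ℝ (b2 j r : F j) y • (b2 j r : F j) := by
    intro j y hy
    have := congrArg (fun z : T.2 j => (z : F j)) ((b2 j).sum_repr' ⟨y, hy⟩)
    simpa using this.symm
  have hcomm : ∀ i j a v, w i j a (ι1 i v) = ι2 j ((Matrix.of fun r c =>
      inner ℝ (b2 j r : F j) (w i j a (b1 i c)) : Matrix (Fin (nn j)) (Fin (dd i)) ℝ) *ᵥ v) := by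
    intro i j a v
    have hmem : ι1 i v ∈ T.1 i := by rw [← hr1 i]; exact LinearMap.mem_range_self _ _
    rw [hexp j _ (hT.1 i j a _ hmem), hι2a]
    refine Finset.sum_congr rfl fun r _ => ?_
    congr 1
    rw [hι1a, map_sum, inner_sum]
    simp only [mulVec, dotProduct, of_apply]
    refine Finset.sum_congr rfl fun c _ => ?_
    rw [map_smul, real_inner_smul_right, mul_comm]
  refine ⟨?_, ?_, ?_⟩
  · by_contra hcon
    push Not at hcon
    refine hT0 (Prod.ext (funext fun i => ?_) (funext fun j => ?_))
    · refine Submodule.finrank_eq_zero.1 ?_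
      have := hcon.1 i
      rw [hdd]; omega
    · refine Submodule.finrank_eq_zero.1 ?_
      have := hcon.2 j
      rw [hnn]; omega
  · have q1 := (geometric_ineq p hp w wt hadj h1 h2 T.1 T.2 hT.1).1
    have q2 := (geometric_ineq p hp w wt hadj h1 h2 _ _ (hT.perp hadj).1).1
    have q3 : ∀ i, (Module.finrank ℝ (T.1 i)ᗮ : ℝ) = Module.finrank ℝ (E i) - dd i := fun i => by
      rw [← (T.1 i).finrank_add_finrank_orthogonal, hdd]; push_cast; ring
    have q4 : ∀ j, (Module.finrank ℝ (T.2 j)ᗮ : ℝ) = Module.finrank ℝ (F j) - nn j := fun j => by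
      rw [← (T.2 j).finrank_add_finrank_orthogonal, hnn]; push_cast; ring
    simp only [hdd, hnn] at q1
    simp only [q3, q4, mul_sub, Finset.sum_sub_distrib] at q2
    linarith
  · intro U1 U2 hU hbot htop
    let W1 : ∀ i, Submodule ℝ (E i) := fun i => (U1 i).map (ι1 i)
    let W2 : ∀ j, Submodule ℝ (F j) := fun j => (U2 j).map (ι2 j)
    have hW : ∀ i j a, ∀ x ∈ W1 i, w i j a x ∈ W2 j := by
      rintro i j a _ ⟨v, hv, rfl⟩
      rw [hcomm]
      exact ⟨_, hU i j a ⟨v, hv, rfl⟩, rfl⟩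
    have f1 : ∀ i, Module.finrank ℝ (W1 i) = Module.finrank ℝ (U1 i) := fun i =>
      (Submodule.equivMapOfInjective _ (hι1 i) _).finrank_eq.symm
    have f2 : ∀ j, Module.finrank ℝ (W2 j) = Module.finrank ℝ (U2 j) := fun j =>
      (Submodule.equivMapOfInjective _ (hι2 j) _).finrank_eq.symm
    obtain ⟨q1, q2⟩ := geometric_ineq p hp w wt hadj h1 h2 W1 W2 hW
    simp only [f1, f2] at q1 q2
    refine lt_of_le_of_ne q1 fun heq => ?_
    have hle : ((W1, W2) : (∀ i, Submodule ℝ (E i)) × (∀ j, Submodule ℝ (F j))) ≤ T := by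
      refine ⟨fun i => ?_, fun j => ?_⟩
      · exact LinearMap.map_le_range.trans (hr1 i).le
      · exact LinearMap.map_le_range.trans (hr2 j).le
    rcases hmin (W1, W2) ⟨hW, q2 heq⟩ hle with h | h
    · refine hbot ⟨fun i => ?_, fun j => ?_⟩
      · have : W1 i = ⊥ := congrFun (congrArg Prod.fst h) i
        apply Submodule.map_injective_of_injective (hι1 i)
        rw [Submodule.map_bot]
        exact this
      · have : W2 j = ⊥ := congrFun (congrArg Prod.snd h) j
        apply Submodule.map_injective_of_injective (hι2 j)
        rw [Submodule.map_bot]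
        exact this
    · refine htop ⟨fun i => ?_, fun j => ?_⟩
      · have : W1 i = T.1 i := congrFun (congrArg Prod.fst h) i
        apply Submodule.map_injective_of_injective (hι1 i)
        rw [Submodule.map_top, hr1]
        exact this
      · have : W2 j = T.2 j := congrFun (congrArg Prod.snd h) j
        apply Submodule.map_injective_of_injective (hι2 j)
        rw [Submodule.map_top, hr2]
        exact this

end Abstract2


theorem collect_basis {s N : ℕ} (T : Fin s → Submodule ℝ (EuclideanSpace ℝ (Fin N)))
    (horth : ∀ ℓ ℓ', ℓ ≠ ℓ' → T ℓ ⟂ T ℓ') (htop : ⨆ ℓ, T ℓ = ⊤) :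
    ∃ (f : Fin s → ℕ) (b : ∀ ℓ, OrthonormalBasis (Fin (f ℓ)) ℝ (T ℓ)) (hN : ∑ ℓ, f ℓ = N)
      (O : Matrix (Fin N) (Fin N) ℝ), O * Oᵀ = 1 ∧
      ∀ ℓ r y, O (fequiv f N hN ⟨ℓ, r⟩) y = (b ℓ r : EuclideanSpace ℝ (Fin N)) y := by
  have hof : OrthogonalFamily ℝ (fun ℓ => T ℓ) fun ℓ => (T ℓ).subtypeₗᵢ :=
    OrthogonalFamily.of_pairwise (fun ℓ ℓ' h => horth ℓ ℓ' h)
  have hint : DirectSum.IsInternal T := by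
    rw [hof.isInternal_iff, htop, Submodule.top_orthogonal_eq_bot]
  let b := fun ℓ => stdOrthonormalBasis ℝ (T ℓ)
  let c := hint.collectedOrthonormalBasis hof b
  have hc : ∀ ℓ r, c ⟨ℓ, r⟩ = (b ℓ r : EuclideanSpace ℝ (Fin N)) := by
    intro ℓ r
    simp [c, DirectSum.IsInternal.collectedOrthonormalBasis]
  have hN : ∑ ℓ, Module.finrank ℝ (T ℓ) = N := by
    have := Module.finrank_eq_card_basis c.toBasis
    rw [finrank_euclideanSpace_fin, Fintype.card_sigma] at this
    simpa using this.symm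
  refine ⟨fun ℓ => Module.finrank ℝ (T ℓ), b, hN, Matrix.of fun x y =>
    c ((fequiv _ N hN).symm x) y, ?_, ?_⟩
  · ext x y
    have := orthonormal_iff_ite.1 c.orthonormal ((fequiv _ N hN).symm x) ((fequiv _ N hN).symm y)
    simp only [EmbeddingLike.apply_eq_iff_eq] at this
    rw [Matrix.one_apply, ← this, Matrix.mul_apply, PiLp.inner_apply]
    refine Finset.sum_congr rfl fun z _ => ?_
    simp [mul_comm]
  · intro ℓ r y
    rw [Matrix.of_apply, Equiv.symm_apply_apply, hc]

theorem euclid_adj {a b : ℕ} (M : Matrix (Fin a) (Fin b) ℝ) (x : EuclideanSpace ℝ (Fin b))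
    (y : EuclideanSpace ℝ (Fin a)) :
    inner ℝ (Matrix.toEuclideanLin M x) y = inner ℝ x (Matrix.toEuclideanLin Mᵀ y) := by
  have := Matrix.toEuclideanLin_conjTranspose_eq_adjoint M
  rw [conjTranspose_eq_transpose_of_trivial] at this
  rw [this, LinearMap.adjoint_inner_right]

theorem euclid_norm {a b : ℕ} (M : Matrix (Fin a) (Fin b) ℝ) (x : EuclideanSpace ℝ (Fin b)) :
    ‖Matrix.toEuclideanLin M x‖ ^ 2 = inner ℝ x (Matrix.toEuclideanLin (Mᵀ * M) x) := by
  rw [← real_inner_self_eq_norm_sq, euclid_adj]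
  congr 1
  simp [Matrix.toEuclideanLin_apply, Matrix.mulVec_mulVec]

theorem euclid_one {a : ℕ} (x : EuclideanSpace ℝ (Fin a)) :
    Matrix.toEuclideanLin (1 : Matrix (Fin a) (Fin a) ℝ) x = x := by
  simp [Matrix.toEuclideanLin_apply]

theorem direct_sum_of_extremizable {k m : ℕ}
    {d : Fin k → ℕ} {n : Fin m → ℕ} {A : Fin k → Fin m → ℕ} (p : Fin m → ℝ)
    (hp : ∀ j, 0 < p j)
    (hbal : ∑ i : Fin k, (d i : ℝ) = ∑ j : Fin m, p j * (n j : ℝ))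
    (V : ∀ i : Fin k, ∀ j : Fin m, Fin (A i j) → Matrix (Fin (n j)) (Fin (d i)) ℝ)
    (hV : Extremizable p V) :
      ∃ (s : ℕ) (dd : Fin s → Fin k → ℕ) (nn : Fin s → Fin m → ℕ)
        (hd' : ∀ i, ∑ ℓ : Fin s, dd ℓ i = d i) (hn' : ∀ j, ∑ ℓ : Fin s, nn ℓ j = n j)
        (g : ∀ i : Fin k, Matrix (Fin (d i)) (Fin (d i)) ℝ)
        (h : ∀ j : Fin m, Matrix (Fin (n j)) (Fin (n j)) ℝ)
        (X : ∀ ℓ : Fin s, ∀ i : Fin k, ∀ j : Fin m,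
          Fin (A i j) → Matrix (Fin (nn ℓ j)) (Fin (dd ℓ i)) ℝ),
        (∀ i, IsUnit (g i).det) ∧ (∀ j, IsUnit (h j).det) ∧
        (∀ ℓ, Stable p (X ℓ)) ∧
        (∀ i j a (ℓ ℓ' : Fin s) (r : Fin (nn ℓ j)) (c : Fin (dd ℓ' i)),
          (h j * V i j a * (g i)⁻¹)
              (Fin.cast (hn' j) (fembed (fun ℓ'' => nn ℓ'' j) ℓ r))
              (Fin.cast (hd' i) (fembed (fun ℓ'' => dd ℓ'' i) ℓ' c)) =
            if hll : ℓ = ℓ' then X ℓ i j a r (Fin.cast (by rw [hll]) c) else 0) := by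
  obtain ⟨hpos, Y, hY, hYc⟩ := hV
  have hmin : ∀ Z : ∀ j : Fin m, Matrix (Fin (n j)) (Fin (n j)) ℝ, (∀ j, (Z j).PosDef) →
      capVal p V Y ≤ capVal p V Z := by
    intro Z hZ
    rw [hYc]
    refine csInf_le ⟨0, ?_⟩ ⟨Z, hZ, rfl⟩
    rintro _ ⟨Y', hY', rfl⟩
    rw [capVal_eq]
    refine div_nonneg (Finset.prod_nonneg fun i _ => ?_) (Finset.prod_nonneg fun j _ => ?_)
    · exact (MM_posSemidef p hp V Y' (fun j => (hY' j).posSemidef) i).det_nonneg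
    · exact Real.rpow_nonneg (hY' j).det_pos.le _
  obtain ⟨G0, h0, hG0, hh0, hgeo⟩ := geometrizable_of_min p hp hbal V Y hY (hYc ▸ hpos) hmin
  set W : ∀ i : Fin k, ∀ j : Fin m, Fin (A i j) → Matrix (Fin (n j)) (Fin (d i)) ℝ :=
    fun i j a => h0 j * V i j a * G0 i with hWdef
  let w : ∀ i j, Fin (A i j) → (EuclideanSpace ℝ (Fin (d i)) →ₗ[ℝ] EuclideanSpace ℝ (Fin (n j))) :=
    fun i j a => Matrix.toEuclideanLin (W i j a)
  let wt : ∀ i j, Fin (A i j) → (EuclideanSpace ℝ (Fin (n j)) →ₗ[ℝ] EuclideanSpace ℝ (Fin (d i))) :=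
    fun i j a => Matrix.toEuclideanLin (W i j a)ᵀ
  have hadj : ∀ i j a x y, inner ℝ (w i j a x) y = inner ℝ x (wt i j a y) :=
    fun i j a x y => euclid_adj _ _ _
  have h1 : ∀ i x, ∑ j, p j * ∑ a, ‖w i j a x‖ ^ 2 = ‖x‖ ^ 2 := by
    intro i x
    rw [← real_inner_self_eq_norm_sq]
    have := congrArg (fun M => inner ℝ x (Matrix.toEuclideanLin M x)) (hgeo.1 i)
    simp only [euclid_one, map_sum, map_smul, LinearMap.sum_apply, LinearMap.smul_apply,
      inner_sum, real_inner_smul_right, Finset.smul_sum] at this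
    rw [← this]
    simp only [w, euclid_norm, Finset.mul_sum]
  have h2 : ∀ j y, ∑ i, ∑ a, ‖wt i j a y‖ ^ 2 = ‖y‖ ^ 2 := by
    intro j y
    rw [← real_inner_self_eq_norm_sq]
    have := congrArg (fun M => inner ℝ y (Matrix.toEuclideanLin M y)) (hgeo.2 j)
    simp only [euclid_one, map_sum, LinearMap.sum_apply, inner_sum] at this
    rw [← this]
    simp only [wt, euclid_norm, transpose_transpose]
  have hbal' : ∑ i, (Module.finrank ℝ (EuclideanSpace ℝ (Fin (d i))) : ℝ) =
      ∑ j, p j * (Module.finrank ℝ (EuclideanSpace ℝ (Fin (n j))) : ℝ) := by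
    simpa only [finrank_euclideanSpace_fin] using hbal
  obtain ⟨s, T, hT, horth, ht1, ht2⟩ := pair_decomp w wt hadj
  choose dd b1 hd' O1 hO1 hO1e using fun i =>
    collect_basis (fun ℓ => (T ℓ).1 i) (fun ℓ ℓ' hl => (horth ℓ ℓ' hl).1 i) (ht1 i)
  choose nn b2 hn' O2 hO2 hO2e using fun j =>
    collect_basis (fun ℓ => (T ℓ).2 j) (fun ℓ ℓ' hl => (horth ℓ ℓ' hl).2 j) (ht2 j)
  have hU1 : ∀ i, IsUnit (G0 i * (O1 i)ᵀ).det := by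
    intro i
    rw [det_mul]
    refine (hG0 i).mul ?_
    have := congrArg det (hO1 i)
    rw [det_mul, det_one, mul_comm] at this
    exact IsUnit.of_mul_eq_one _ this
  have hU2 : ∀ j, IsUnit (O2 j).det := by
    intro i
    have := congrArg det (hO2 i)
    rw [det_mul, det_one] at this
    exact IsUnit.of_mul_eq_one _ this
  refine ⟨s, fun ℓ i => dd i ℓ, fun ℓ j => nn j ℓ, hd', hn', fun i => (G0 i * (O1 i)ᵀ)⁻¹,
    fun j => O2 j * h0 j, fun ℓ i j a => Matrix.of fun r c =>
      inner ℝ (b2 j ℓ r : EuclideanSpace ℝ (Fin (n j))) (w i j a (b1 i ℓ c)), ?_, ?_, ?_, ?_⟩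
  · intro i
    exact (isUnit_nonsing_inv_det_iff).2 (hU1 i)
  · intro j
    rw [det_mul]
    exact (hU2 j).mul (hh0 j)
  · intro ℓ
    exact stable_of_minimal p hp w wt hadj h1 h2 hbal' (T ℓ) (hT ℓ).1 (hT ℓ).2.1 (hT ℓ).2.2
      (fun i => dd i ℓ) (fun j => nn j ℓ) (fun i => b1 i ℓ) (fun j => b2 j ℓ)
  · intro i j a ℓ ℓ' r c
    rw [nonsing_inv_nonsing_inv _ (hU1 i)]
    have e1 : O2 j * h0 j * V i j a * (G0 i * (O1 i)ᵀ) = O2 j * (W i j a * (O1 i)ᵀ) := by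
      simp only [hWdef, Matrix.mul_assoc]
    have e2 : (O2 j * (W i j a * (O1 i)ᵀ))
        (Fin.cast (hn' j) (fembed (nn j) ℓ r)) (Fin.cast (hd' i) (fembed (dd i) ℓ' c)) =
        inner ℝ (b2 j ℓ r : EuclideanSpace ℝ (Fin (n j))) (w i j a (b1 i ℓ' c)) := by
      rw [← fequiv_apply, ← fequiv_apply, Matrix.mul_apply, PiLp.inner_apply]
      refine Finset.sum_congr rfl fun z _ => ?_
      simp only [w, toEuclideanLin_apply, hO2e, Matrix.mul_apply, transpose_apply, hO1e, mulVec,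
        dotProduct]
      simp [mul_comm]
    rw [e1]
    refine e2.trans ?_
    split_ifs with hll
    · subst hll
      rfl
    · have m1 : w i j a (b1 i ℓ' c) ∈ (T ℓ').2 j := (hT ℓ').1.1 i j a _ (b1 i ℓ' c).2
      exact (Submodule.isOrtho_iff_inner_eq.1 ((horth ℓ ℓ' hll).2 j)) _ (b2 j ℓ r).2 _ m1

/-- For positive rational weights, `(V, p)` is extremizable iff `V` is
isomorphic, via base changes `g_i ∈ GL(d_i, ℝ)`, `h_j ∈ GL(n_j, ℝ)`, to a direct sum of
`p`-stable representations: there are dimension vectors `d¹, …, dˢ` summing to the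
dimension vector of `V` and block representations `X ℓ` of dimension vector `d^ℓ`, each
`p`-stable, such that every transformed matrix `h_j V_a g_i⁻¹` is block diagonal with
diagonal blocks `X ℓ`. -/
theorem extremizable_iff_direct_sum_of_stables {k m : ℕ} (hk : 0 < k) (hm : 0 < m)
    {d : Fin k → ℕ} {n : Fin m → ℕ} {A : Fin k → Fin m → ℕ} (p : Fin m → ℚ)
    (hd : ∀ i, 0 < d i) (hn : ∀ j, 0 < n j) (hp : ∀ j, 0 < p j)
    (hbal : ∑ i : Fin k, (d i : ℝ) = ∑ j : Fin m, (p j : ℝ) * (n j : ℝ))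
    (V : ∀ i : Fin k, ∀ j : Fin m, Fin (A i j) → Matrix (Fin (n j)) (Fin (d i)) ℝ) :
    Extremizable (fun j => (p j : ℝ)) V ↔
      ∃ (s : ℕ) (dd : Fin s → Fin k → ℕ) (nn : Fin s → Fin m → ℕ)
        (hd' : ∀ i, ∑ ℓ : Fin s, dd ℓ i = d i) (hn' : ∀ j, ∑ ℓ : Fin s, nn ℓ j = n j)
        (g : ∀ i : Fin k, Matrix (Fin (d i)) (Fin (d i)) ℝ)
        (h : ∀ j : Fin m, Matrix (Fin (n j)) (Fin (n j)) ℝ)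
        (X : ∀ ℓ : Fin s, ∀ i : Fin k, ∀ j : Fin m,
          Fin (A i j) → Matrix (Fin (nn ℓ j)) (Fin (dd ℓ i)) ℝ),
        (∀ i, IsUnit (g i).det) ∧ (∀ j, IsUnit (h j).det) ∧
        (∀ ℓ, Stable (fun j => (p j : ℝ)) (X ℓ)) ∧
        (∀ i j a (ℓ ℓ' : Fin s) (r : Fin (nn ℓ j)) (c : Fin (dd ℓ' i)),
          (h j * V i j a * (g i)⁻¹)
              (Fin.cast (hn' j) (fembed (fun ℓ'' => nn ℓ'' j) ℓ r))
              (Fin.cast (hd' i) (fembed (fun ℓ'' => dd ℓ'' i) ℓ' c)) =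
            if hll : ℓ = ℓ' then X ℓ i j a r (Fin.cast (by rw [hll]) c) else 0) := by
  have hp' : ∀ j, (0 : ℝ) < (p j : ℝ) := fun j => by exact_mod_cast hp j
  constructor
  · intro hV
    exact direct_sum_of_extremizable (fun j => (p j : ℝ)) hp' hbal V hV
  · rintro ⟨s, dd, nn, hd', hn', g, h, X, hg, hh, hX, hblock⟩
    exact extremizable_of_direct_sum (fun j => (p j : ℝ)) hp' V s dd nn hd' hn' g h X hg hh hX hblock
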